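/- arXiv:2112.03180 — 4 statements merged into one kernel-verified Lean document; each statement's English description precedes it below -/
import Mathlib

section
/- Let a < b be real numbers, let (M_n)_{n≥0} be a sequence of positive reals with M_0 = 1 which is log-convex (M_n^2 ≤ M_{n-1} M_{n+1} for all n ≥ 1), and assume: (A) there exists m_0 ≥ 0 such that M_j ≤ M_k^{j/k} · M_i^{j/i} for all integers i, j, k with i, k > m_0, i < j and j/i < k; (B) there exists c > 0 such that M_n ≥ c^n n^n for all n ≥ 1. Let (d_n)_{n≥0} be a strictly increasing sequence of positive integers tending to infinity with d_{n+1}/d_n ≤ c_0 for all n, for some constant c_0 > 0. If f : [a,b] → ℝ is C^∞ and max_{x∈[a,b]} |f^{(d_n)}(x)| ≤ M_{d_n} for every n, then f belongs to the Denjoy–Carleman class C^M([a,b]); that is, there exists K > 0 such that max_{x∈[a,b]} |f^{(n)}(x)| ≤ K^{n+1} M_n for all n ≥ 0. -/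
open Set Filter

/-!
By Chebyshev's extremal property, a polynomial of degree at most `n` bounded by `A` on `[0, 2]` has
`k`-th derivative at most `n ^ k * exp n * A` at the endpoint `0`. Applied to a Taylor polynomial at
an endpoint, this is a Landau–Kolmogorov inequality whose constant is only exponential in the order:
`‖f^(j)‖ θ ^ j ≤ exp 4 ^ N * (sup ‖f‖ + sup ‖f^(N)‖ θ ^ N)` for `j < N`, as soon as a segment of
length `2 N θ` fits into each half of the interval.

For `d i ≤ l < d (i + 1)`, use it between the derivatives of orders `p = d i` and `q = d (i + 1)`.
Log-convexity and (A) make the numbers `M n ^ (1 / n)` comparable for `n = p, l, q`, so both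
derivatives are bounded geometrically, by `ν ^ p` and `ν ^ q` with `ν` of the order of
`M l ^ (1 / l)`; the step `θ = ε / ν` then bounds `f^(l)` by `K ^ l * ν ^ l`. Condition (B) says
that `ν` is at least of the order of `l`, hence of `q`, which is what lets the segment fit.
-/

section EndpointMarkov

open Polynomial
open scoped Nat

theorem factorial_mul_iterate_derivative_T_eval_one_le (n k : ℕ) :
    (k ! : ℝ) * (derivative^[k] (Chebyshev.T ℝ n)).eval 1 ≤ (n : ℝ) ^ (2 * k) := by
  induction k with
  | zero => simp
  | succ k ih =>
    have hrec := Chebyshev.iterate_derivative_T_eval_one_recurrence (R := ℝ) n k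
    have hnonneg (l : ℕ) : 0 ≤ (derivative^[l] (Chebyshev.T ℝ n)).eval 1 :=
      (abs_nonneg _).trans (Chebyshev.abs_iterate_derivative_T_real_le n l (x := 1) (by simp))
    have hstep : (k + 1) * (derivative^[k + 1] (Chebyshev.T ℝ n)).eval 1 ≤
        (n : ℝ) ^ 2 * (derivative^[k] (Chebyshev.T ℝ n)).eval 1 :=
      calc (k + 1) * (derivative^[k + 1] (Chebyshev.T ℝ n)).eval 1
          ≤ (2 * k + 1) * (derivative^[k + 1] (Chebyshev.T ℝ n)).eval 1 :=
            mul_le_mul_of_nonneg_right (by linarith [k.cast_nonneg (α := ℝ)]) (hnonneg _)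
        _ = ((n : ℝ) ^ 2 - k ^ 2) * (derivative^[k] (Chebyshev.T ℝ n)).eval 1 := mod_cast hrec
        _ ≤ (n : ℝ) ^ 2 * (derivative^[k] (Chebyshev.T ℝ n)).eval 1 :=
            mul_le_mul_of_nonneg_right (sub_le_self _ (sq_nonneg _)) (hnonneg _)
    calc ((k + 1)! : ℝ) * (derivative^[k + 1] (Chebyshev.T ℝ n)).eval 1
        = k ! * ((k + 1) * (derivative^[k + 1] (Chebyshev.T ℝ n)).eval 1) := by
          rw [Nat.factorial_succ]; push_cast; ring
      _ ≤ k ! * (n ^ 2 * (derivative^[k] (Chebyshev.T ℝ n)).eval 1) := by gcongr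
      _ = n ^ 2 * (k ! * (derivative^[k] (Chebyshev.T ℝ n)).eval 1) := by ring
      _ ≤ n ^ 2 * n ^ (2 * k) := by gcongr
      _ = n ^ (2 * (k + 1)) := by ring

theorem iterate_derivative_T_eval_one_le (n k : ℕ) :
    (derivative^[k] (Chebyshev.T ℝ n)).eval 1 ≤ (n : ℝ) ^ k * Real.exp n :=
  calc (derivative^[k] (Chebyshev.T ℝ n)).eval 1
      ≤ (n : ℝ) ^ (2 * k) / k ! := by
        rw [le_div_iff₀' (by positivity)]
        exact factorial_mul_iterate_derivative_T_eval_one_le n k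
    _ = (n : ℝ) ^ k * ((n : ℝ) ^ k / k !) := by rw [two_mul, pow_add, mul_div_assoc]
    _ ≤ (n : ℝ) ^ k * Real.exp n := by
        gcongr
        exact Real.pow_div_factorial_le_exp _ n.cast_nonneg k

theorem neg_one_pow_mul_eval_zero_iterate_derivative_le {P : ℝ[X]} {n : ℕ} (hdeg : P.degree ≤ n)
    (hP : ∀ t ∈ Icc (0 : ℝ) 2, |P.eval t| ≤ 1) (k : ℕ) :
    (-1) ^ k * (derivative^[k] P).eval 0 ≤ (n : ℝ) ^ k * Real.exp n := by
  have hcomp_deg : (P.comp (1 - X)).degree ≤ n := by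
    rw [← natDegree_le_iff_degree_le] at hdeg ⊢
    have hlin : (1 - X : ℝ[X]).natDegree ≤ 1 := by compute_degree
    exact natDegree_comp_le.trans ((Nat.mul_le_mul hdeg hlin).trans_eq (mul_one n))
  have hcomp_bdd : ∀ x ∈ Icc (-1 : ℝ) 1, |(P.comp (1 - X)).eval x| ≤ 1 := fun x hx => by
    simpa using hP (1 - x) ⟨by linarith [hx.2], by linarith [hx.1]⟩
  have hextremal := (Chebyshev.eval_iterate_derivative_le_of_forall_abs_le_one (k := k) le_rfl
    hcomp_deg hcomp_bdd).trans (iterate_derivative_T_eval_one_le n k)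
  simpa [iterate_derivative_comp_one_sub_X] using hextremal

theorem abs_eval_zero_iterate_derivative_le {P : ℝ[X]} {n : ℕ} (hdeg : P.degree ≤ n)
    (hP : ∀ t ∈ Icc (0 : ℝ) 2, |P.eval t| ≤ 1) (k : ℕ) :
    |(derivative^[k] P).eval 0| ≤ (n : ℝ) ^ k * Real.exp n := by
  have hneg := neg_one_pow_mul_eval_zero_iterate_derivative_le (P := -P) (by rwa [degree_neg])
    (by simpa using hP) k
  rw [iterate_derivative_neg, eval_neg, mul_neg] at hneg
  calc |(derivative^[k] P).eval 0|
      = |(-1) ^ k * (derivative^[k] P).eval 0| := by rw [abs_mul, abs_neg_one_pow, one_mul]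
    _ ≤ (n : ℝ) ^ k * Real.exp n :=
        abs_le'.2 ⟨neg_one_pow_mul_eval_zero_iterate_derivative_le hdeg hP k, hneg⟩

theorem factorial_mul_abs_coeff_le {P : ℝ[X]} {n : ℕ} (hdeg : P.degree ≤ n) {A : ℝ}
    (hP : ∀ t ∈ Icc (0 : ℝ) 2, |P.eval t| ≤ A) (k : ℕ) :
    k ! * |P.coeff k| ≤ (n : ℝ) ^ k * Real.exp n * A := by
  have hA : 0 ≤ A := (abs_nonneg _).trans (hP 0 (by simp))
  rcases hA.eq_or_lt with rfl | hA
  · have hzero : P = 0 := eq_zero_of_infinite_isRoot P <|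
      (Icc_infinite (zero_lt_two' ℝ)).mono fun t ht => abs_nonpos_iff.1 (hP t ht)
    simp [hzero]
  · have hnormalized := abs_eval_zero_iterate_derivative_le (P := C A⁻¹ * P) (n := n)
      (by rwa [degree_C_mul (inv_ne_zero hA.ne')])
      (fun t ht => by
        rw [eval_C_mul, abs_mul, abs_of_pos (inv_pos.2 hA), inv_mul_le_one₀ hA]
        exact hP t ht) k
    have hcoeff : (derivative^[k] P).eval 0 = k ! * P.coeff k := by
      rw [← coeff_zero_eq_eval_zero, coeff_iterate_derivative, zero_add, Nat.descFactorial_self,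
        nsmul_eq_mul]
    rwa [iterate_derivative_C_mul, eval_C_mul, hcoeff, abs_mul, abs_of_pos (inv_pos.2 hA),
      inv_mul_le_iff₀' hA, abs_mul, Nat.abs_cast] at hnormalized

variable {E : Type*} [NormedAddCommGroup E] [NormedSpace ℝ E]

theorem factorial_mul_norm_coeff_le {n : ℕ} {v : ℕ → E} {A : ℝ}
    (hv : ∀ t ∈ Icc (0 : ℝ) 2, ‖∑ k ∈ Finset.range (n + 1), t ^ k • v k‖ ≤ A)
    {j : ℕ} (hj : j ≤ n) : j ! * ‖v j‖ ≤ (n : ℝ) ^ j * Real.exp n * A := by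
  obtain ⟨g, hg, hgv⟩ := exists_dual_vector'' ℝ (v j)
  let P : ℝ[X] := ∑ k ∈ Finset.range (n + 1), monomial k (g (v k))
  have hdeg : P.degree ≤ n := (degree_sum_le _ _).trans <| Finset.sup_le fun k hk =>
    (degree_monomial_le k _).trans (by exact_mod_cast Finset.mem_range_succ_iff.1 hk)
  have hcoeff : P.coeff j = ‖v j‖ := by
    simp [P, coeff_monomial, Nat.lt_succ_of_le hj, hgv]
  have heval (t : ℝ) : P.eval t = g (∑ k ∈ Finset.range (n + 1), t ^ k • v k) := by
    simp [P, eval_finsetSum, mul_comm]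
  have hP := factorial_mul_abs_coeff_le hdeg (A := A)
    (fun t ht => by
      rw [heval, ← Real.norm_eq_abs]
      exact (g.le_of_opNorm_le hg _).trans ((one_mul _).trans_le (hv t ht))) j
  rwa [hcoeff, abs_norm] at hP

end EndpointMarkov

section IteratedDerivWithin

variable {E : Type*} [NormedAddCommGroup E] [NormedSpace ℝ E] {f : ℝ → E} {s t : Set ℝ}

theorem iteratedDerivWithin_iteratedDerivWithin (j p : ℕ) :
    iteratedDerivWithin j (iteratedDerivWithin p f s) s = iteratedDerivWithin (p + j) f s := by
  ext x
  simp only [iteratedDerivWithin_eq_iterate, add_comm p, Function.iterate_add_apply,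
    funext fun y => iteratedDerivWithin_eq_iterate (n := p) (f := f) (s := s) (x := y)]

theorem contDiffOn_infty_iteratedDerivWithin (hs : UniqueDiffOn ℝ s)
    (hf : ContDiffOn ℝ (⊤ : ℕ∞) f s) (p : ℕ) :
    ContDiffOn ℝ (⊤ : ℕ∞) (iteratedDerivWithin p f s) s := by
  induction p with
  | zero => simpa using hf
  | succ p ih =>
    rw [← iteratedDerivWithin_iteratedDerivWithin, iteratedDerivWithin_succ',
      iteratedDerivWithin_zero]
    exact ih.derivWithin hs (by simp)

theorem iteratedDerivWithin_comp_add_mul (hs : UniqueDiffOn ℝ s) (ht : UniqueDiffOn ℝ t)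
    {x w : ℝ} (hst : MapsTo (fun y => x + y * w) s t) {n : ℕ} (hf : ContDiffOn ℝ n f t)
    {y : ℝ} (hy : y ∈ s) :
    iteratedDerivWithin n (fun y => f (x + y * w)) s y =
      w ^ n • iteratedDerivWithin n f t (x + y * w) := by
  induction n generalizing y with
  | zero => simp
  | succ n ih =>
    have hprev : s.EqOn (iteratedDerivWithin n (fun y => f (x + y * w)) s)
        (fun y => w ^ n • iteratedDerivWithin n f t (x + y * w)) := fun y hy => ih hf.of_succ hy
    have hderiv : HasDerivWithinAt (iteratedDerivWithin n f t)
        (iteratedDerivWithin (n + 1) f t (x + y * w)) t (x + y * w) := by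
      rw [iteratedDerivWithin_succ]
      exact (hf.differentiableOn_iteratedDerivWithin (Nat.cast_lt.mpr n.lt_succ_self) ht _
        (hst hy)).hasDerivWithinAt
    have haffine : HasDerivWithinAt (fun y => x + y * w) w s y := by
      simpa using ((hasDerivWithinAt_id y s).mul_const w).const_add x
    rw [iteratedDerivWithin_succ, derivWithin_congr hprev (hprev hy), pow_succ, mul_smul]
    exact ((hderiv.scomp y haffine hst).const_smul (w ^ n)).derivWithin (hs y hy)

end IteratedDerivWithin

section LandauKolmogorov

open scoped Nat

variable {E : Type*} [NormedAddCommGroup E] [NormedSpace ℝ E]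

theorem norm_taylorWithinEval_le {g : ℝ → E} {n : ℕ} {a b A B : ℝ} (hab : a ≤ b)
    (hg : ContDiffOn ℝ (n + 1) g (Icc a b)) (hA : ∀ t ∈ Icc a b, ‖g t‖ ≤ A)
    (hB : ∀ t ∈ Icc a b, ‖iteratedDerivWithin (n + 1) g (Icc a b) t‖ ≤ B)
    {t : ℝ} (ht : t ∈ Icc a b) :
    ‖taylorWithinEval g n (Icc a b) a t‖ ≤ A + B * (b - a) ^ (n + 1) / n ! := by
  have hB_nonneg : 0 ≤ B := (norm_nonneg _).trans (hB t ht)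
  calc ‖taylorWithinEval g n (Icc a b) a t‖
      ≤ ‖g t‖ + ‖g t - taylorWithinEval g n (Icc a b) a t‖ := norm_le_norm_add_norm_sub _ _
    _ ≤ A + B * (t - a) ^ (n + 1) / n ! :=
        add_le_add (hA t ht) (taylor_mean_remainder_bound hab hg ht hB)
    _ ≤ A + B * (b - a) ^ (n + 1) / n ! := by
        have := sub_nonneg.2 ht.1
        gcongr
        exact ht.2

theorem norm_iteratedDerivWithin_zero_le {g : ℝ → E} {n : ℕ} {A B : ℝ}
    (hg : ContDiffOn ℝ (n + 1) g (Icc 0 2)) (hA : ∀ t ∈ Icc (0 : ℝ) 2, ‖g t‖ ≤ A)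
    (hB : ∀ t ∈ Icc (0 : ℝ) 2, ‖iteratedDerivWithin (n + 1) g (Icc 0 2) t‖ ≤ B)
    {j : ℕ} (hj : j ≤ n) :
    ‖iteratedDerivWithin j g (Icc 0 2) 0‖ ≤
      (n : ℝ) ^ j * Real.exp n * (A + B * 2 ^ (n + 1) / n !) := by
  have hcoeff := factorial_mul_norm_coeff_le (n := n)
    (v := fun k => (k ! : ℝ)⁻¹ • iteratedDerivWithin k g (Icc 0 2) 0)
    (A := A + B * 2 ^ (n + 1) / n !)
    (fun t ht => by
      simpa [taylor_within_apply, smul_smul, mul_comm] using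
        norm_taylorWithinEval_le zero_le_two hg hA hB ht) hj
  rwa [norm_smul, norm_inv, Real.norm_natCast, mul_inv_cancel_left₀ (by positivity)] at hcoeff

theorem two_mul_pow_div_factorial_le (n : ℕ) :
    (2 * (n + 1 : ℝ)) ^ (n + 1) / n ! ≤ Real.exp 3 ^ (n + 1) := by
  have hfactorial : ((n + 1 : ℝ)) ^ (n + 1) / (n + 1)! ≤ Real.exp 1 ^ (n + 1) := by
    rw [Real.exp_one_pow]
    exact_mod_cast Real.pow_div_factorial_le_exp _ (n + 1).cast_nonneg (n + 1)
  have hlinear : (n + 1 : ℝ) ≤ Real.exp 1 ^ (n + 1) := by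
    rw [Real.exp_one_pow]
    push_cast
    linarith [Real.add_one_le_exp (n + 1 : ℝ)]
  have htwo : (2 : ℝ) ≤ Real.exp 1 := by linarith [Real.add_one_le_exp 1]
  calc (2 * (n + 1 : ℝ)) ^ (n + 1) / n !
      = 2 ^ (n + 1) * (n + 1) * ((n + 1) ^ (n + 1) / (n + 1)!) := by
        rw [Nat.factorial_succ, mul_pow]; push_cast; field_simp
    _ ≤ Real.exp 1 ^ (n + 1) * Real.exp 1 ^ (n + 1) * Real.exp 1 ^ (n + 1) := by gcongr
    _ = Real.exp 3 ^ (n + 1) := by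
        rw [← mul_pow, ← mul_pow, ← Real.exp_add, ← Real.exp_add]; norm_num

theorem abs_pow_mul_norm_iteratedDerivWithin_le {f : ℝ → E} {s : Set ℝ} (hs : UniqueDiffOn ℝ s)
    {n : ℕ} (hf : ContDiffOn ℝ (n + 1) f s) {A B : ℝ} (hA : ∀ y ∈ s, ‖f y‖ ≤ A)
    (hB : ∀ y ∈ s, ‖iteratedDerivWithin (n + 1) f s y‖ ≤ B) {x w : ℝ}
    (hmaps : MapsTo (fun t => x + t * w) (Icc 0 2) s) {j : ℕ} (hj : j ≤ n) :
    |w| ^ j * ‖iteratedDerivWithin j f s x‖ ≤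
      (n : ℝ) ^ j * Real.exp n * (A + |w| ^ (n + 1) * B * 2 ^ (n + 1) / n !) := by
  have hcomp {k : ℕ} (hk : k ≤ n + 1) {t : ℝ} (ht : t ∈ Icc (0 : ℝ) 2) :
      ‖iteratedDerivWithin k (fun t => f (x + t * w)) (Icc 0 2) t‖ =
        |w| ^ k * ‖iteratedDerivWithin k f s (x + t * w)‖ := by
    rw [iteratedDerivWithin_comp_add_mul (uniqueDiffOn_Icc zero_lt_two) hs hmaps
      (hf.of_le (by exact_mod_cast hk)) ht, norm_smul, norm_pow, Real.norm_eq_abs]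
  have hendpoint := norm_iteratedDerivWithin_zero_le (A := A) (B := |w| ^ (n + 1) * B)
    (hf.comp (by fun_prop) hmaps) (fun t ht => hA _ (hmaps ht))
    (fun t ht => (hcomp le_rfl ht).trans_le (by gcongr; exact hB _ (hmaps ht))) hj
  rwa [Function.comp_def, hcomp (by lia) (left_mem_Icc.2 zero_le_two), zero_mul,
    add_zero] at hendpoint

theorem exists_abs_eq_mapsTo_Icc {a b x r : ℝ} (hx : x ∈ Icc a b) (hr : 0 ≤ r)
    (hrab : 4 * r ≤ b - a) :
    ∃ w : ℝ, |w| = r ∧ MapsTo (fun t => x + t * w) (Icc 0 2) (Icc a b) := by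
  rcases le_total x ((a + b) / 2) with hleft | hright
  · refine ⟨r, abs_of_nonneg hr, fun t ht => ⟨?_, ?_⟩⟩ <;> nlinarith [ht.1, ht.2, hx.1]
  · refine ⟨-r, by rw [abs_neg, abs_of_nonneg hr], fun t ht => ⟨?_, ?_⟩⟩ <;>
      nlinarith [ht.1, ht.2, hx.2]

theorem norm_iteratedDerivWithin_mul_pow_le {f : ℝ → E} {a b : ℝ} (hab : a < b) {n : ℕ}
    (hf : ContDiffOn ℝ (n + 1) f (Icc a b)) {A B : ℝ} (hA : ∀ y ∈ Icc a b, ‖f y‖ ≤ A)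
    (hB : ∀ y ∈ Icc a b, ‖iteratedDerivWithin (n + 1) f (Icc a b) y‖ ≤ B) {θ : ℝ} (hθ : 0 ≤ θ)
    (hθab : 4 * ((n + 1) * θ) ≤ b - a) {j : ℕ} (hj : j ≤ n) {x : ℝ} (hx : x ∈ Icc a b) :
    ‖iteratedDerivWithin j f (Icc a b) x‖ * θ ^ j ≤
      Real.exp 4 ^ (n + 1) * (A + B * θ ^ (n + 1)) := by
  have hA_nonneg : 0 ≤ A := (norm_nonneg _).trans (hA x hx)
  have hB_nonneg : 0 ≤ B := (norm_nonneg _).trans (hB x hx)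
  obtain ⟨w, hw, hmaps⟩ := exists_abs_eq_mapsTo_Icc hx (by positivity : 0 ≤ (n + 1) * θ) hθab
  have hsegment := abs_pow_mul_norm_iteratedDerivWithin_le (uniqueDiffOn_Icc hab) hf hA hB hmaps hj
  rw [hw] at hsegment
  have hexp : Real.exp n ≤ Real.exp 1 ^ (n + 1) := by
    rw [Real.exp_one_pow]; gcongr; simp
  have hone : 1 ≤ Real.exp 3 ^ (n + 1) := one_le_pow₀ (Real.one_le_exp (by norm_num))
  refine le_of_mul_le_mul_left ?_ (by positivity : (0 : ℝ) < (n + 1) ^ j)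
  calc (n + 1 : ℝ) ^ j * (‖iteratedDerivWithin j f (Icc a b) x‖ * θ ^ j)
      = ((n + 1) * θ) ^ j * ‖iteratedDerivWithin j f (Icc a b) x‖ := by rw [mul_pow]; ring
    _ ≤ n ^ j * Real.exp n * (A + ((n + 1) * θ) ^ (n + 1) * B * 2 ^ (n + 1) / n !) := hsegment
    _ = n ^ j * (Real.exp n * (1 * A + (2 * (n + 1)) ^ (n + 1) / n ! * (B * θ ^ (n + 1)))) := by
        simp only [mul_pow]; ring
    _ ≤ (n + 1) ^ j * (Real.exp 1 ^ (n + 1) *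
          (Real.exp 3 ^ (n + 1) * A + Real.exp 3 ^ (n + 1) * (B * θ ^ (n + 1)))) := by
        gcongr
        · linarith
        · exact two_mul_pow_div_factorial_le n
    _ = (n + 1) ^ j * ((Real.exp 1 * Real.exp 3) ^ (n + 1) * (A + B * θ ^ (n + 1))) := by ring
    _ = (n + 1) ^ j * (Real.exp 4 ^ (n + 1) * (A + B * θ ^ (n + 1))) := by
        rw [← Real.exp_add]; norm_num

theorem one_le_two_mul_exp_four_div {ε : ℝ} (hε : 0 < ε) (hε_one : ε ≤ 1) :
    1 ≤ 2 * Real.exp 4 / ε := by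
  rw [one_le_div hε]
  linarith [Real.one_le_exp (zero_le_four (α := ℝ))]

theorem norm_iteratedDerivWithin_le_geometric {f : ℝ → E} {a b : ℝ} (hab : a < b)
    (hf : ContDiffOn ℝ (⊤ : ℕ∞) f (Icc a b)) {p l q : ℕ} (hpl : p ≤ l) (hlq : l < q) {ν ε : ℝ}
    (hν : 0 < ν) (hε : 0 < ε) (hε_one : ε ≤ 1) (hεν : 4 * (q * ε) ≤ ν * (b - a))
    (hp : ∀ x ∈ Icc a b, ‖iteratedDerivWithin p f (Icc a b) x‖ ≤ ν ^ p)
    (hq : ∀ x ∈ Icc a b, ‖iteratedDerivWithin q f (Icc a b) x‖ ≤ ν ^ q) {x : ℝ}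
    (hx : x ∈ Icc a b) :
    ‖iteratedDerivWithin l f (Icc a b) x‖ ≤ (2 * Real.exp 4 / ε) ^ q * ν ^ l := by
  obtain ⟨j, rfl⟩ := exists_add_of_le hpl
  obtain ⟨n, rfl⟩ : ∃ n, q = p + (n + 1) := ⟨q - p - 1, by lia⟩
  have hstep : 4 * ((n + 1) * (ε / ν)) ≤ b - a := by
    refine le_of_mul_le_mul_left (le_trans ?_ hεν) hν
    calc ν * (4 * ((n + 1) * (ε / ν))) = 4 * (((n + 1 : ℕ) : ℝ) * ε) := by push_cast; field_simp
      _ ≤ 4 * (((p + (n + 1) : ℕ) : ℝ) * ε) := by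
          gcongr 4 * (?_ * ε)
          exact_mod_cast Nat.le_add_left _ _
  have hlandau := norm_iteratedDerivWithin_mul_pow_le hab
    (contDiffOn_infty.1 (contDiffOn_infty_iteratedDerivWithin (uniqueDiffOn_Icc hab) hf p) (n + 1))
    hp (by simpa only [iteratedDerivWithin_iteratedDerivWithin] using hq)
    (by positivity) hstep (by lia : j ≤ n) hx
  rw [iteratedDerivWithin_iteratedDerivWithin] at hlandau
  refine le_of_mul_le_mul_right ?_ (by positivity : 0 < (ε / ν) ^ j)
  calc ‖iteratedDerivWithin (p + j) f (Icc a b) x‖ * (ε / ν) ^ j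
      ≤ Real.exp 4 ^ (n + 1) * (ν ^ p + ν ^ (p + (n + 1)) * (ε / ν) ^ (n + 1)) := hlandau
    _ = Real.exp 4 ^ (n + 1) * (1 + ε ^ (n + 1)) * ν ^ p := by
        rw [div_pow, pow_add ν p]; field_simp
    _ ≤ Real.exp 4 ^ (n + 1) * 2 ^ (n + 1) * ν ^ p := by
        gcongr
        calc 1 + ε ^ (n + 1) ≤ 1 + 1 := by gcongr; exact pow_le_one₀ hε.le hε_one
          _ = 2 ^ 1 := by norm_num
          _ ≤ 2 ^ (n + 1) := pow_le_pow_right₀ one_le_two (by lia)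
    _ = (2 * Real.exp 4 / ε) ^ (n + 1) * ε ^ (n + 1) * ν ^ p := by
        rw [div_pow, div_mul_cancel₀ _ (by positivity), mul_pow, mul_comm (2 ^ _)]
    _ ≤ (2 * Real.exp 4 / ε) ^ (p + (n + 1)) * ε ^ j * ν ^ p := by
        gcongr ?_ * ?_ * _
        · exact pow_le_pow_right₀ (one_le_two_mul_exp_four_div hε hε_one) (by lia)
        · exact pow_le_pow_of_le_one hε.le hε_one (by lia)
    _ = (2 * Real.exp 4 / ε) ^ (p + (n + 1)) * ν ^ (p + j) * (ε / ν) ^ j := by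
        rw [div_pow ε, pow_add ν]; field_simp

end LandauKolmogorov

section DenjoyCarleman

/-- The root sequence `M n ^ (1 / n)` of a weight sequence, the scale on which the `n`-th derivative
of a function in its Denjoy–Carleman class grows. At `n = 0` it is `1`, as `(0 : ℝ)⁻¹ = 0`. -/
noncomputable def weightRoot (M : ℕ → ℝ) (n : ℕ) : ℝ := M n ^ (n : ℝ)⁻¹

variable {M : ℕ → ℝ}

theorem weightRoot_pos (hM : ∀ n, 0 < M n) (n : ℕ) : 0 < weightRoot M n :=
  Real.rpow_pos_of_pos (hM n) _

theorem weightRoot_pow (hM : ∀ n, 0 < M n) {n : ℕ} (hn : n ≠ 0) : weightRoot M n ^ n = M n :=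
  Real.rpow_inv_natCast_pow (hM n).le hn

theorem mul_natCast_le_weightRoot (hM : ∀ n, 0 < M n) {c : ℝ} {n : ℕ} (hn : n ≠ 0)
    (h : c ^ n * (n : ℝ) ^ n ≤ M n) : c * n ≤ weightRoot M n := by
  refine le_of_pow_le_pow_left₀ hn (weightRoot_pos hM n).le ?_
  rwa [mul_pow, weightRoot_pow hM hn]

theorem pow_succ_le_pow_of_logConvex (hM : ∀ n, 0 < M n) (hM_zero : M 0 ≤ 1)
    (hlogconv : ∀ n, M (n + 1) ^ 2 ≤ M n * M (n + 2)) (n : ℕ) :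
    M n ^ (n + 1) ≤ M (n + 1) ^ n := by
  induction n with
  | zero => simpa using hM_zero
  | succ n ih =>
    refine le_of_mul_le_mul_left ?_ (pow_pos (hM n) (n + 1))
    calc M n ^ (n + 1) * M (n + 1) ^ (n + 1 + 1)
        ≤ M (n + 1) ^ n * M (n + 1) ^ (n + 1 + 1) := by
          gcongr
          exact pow_nonneg (hM _).le _
      _ = (M (n + 1) ^ 2) ^ (n + 1) := by ring
      _ ≤ (M n * M (n + 1 + 1)) ^ (n + 1) := by
          gcongr
          exact hlogconv n
      _ = M n ^ (n + 1) * M (n + 1 + 1) ^ (n + 1) := mul_pow _ _ _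

theorem monotoneOn_weightRoot (hM : ∀ n, 0 < M n) (hM_zero : M 0 ≤ 1)
    (hlogconv : ∀ n, M (n + 1) ^ 2 ≤ M n * M (n + 2)) :
    MonotoneOn (weightRoot M) (Ici 1) := by
  refine monotoneOn_nat_Ici_of_le_succ fun n hn => ?_
  refine le_of_pow_le_pow_left₀ (n := n * (n + 1)) (by positivity) (weightRoot_pos hM _).le ?_
  calc weightRoot M n ^ (n * (n + 1)) = M n ^ (n + 1) := by
        rw [pow_mul, weightRoot_pow hM (by lia)]
    _ ≤ M (n + 1) ^ n := pow_succ_le_pow_of_logConvex hM hM_zero hlogconv n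
    _ = weightRoot M (n + 1) ^ (n * (n + 1)) := by
        rw [mul_comm, pow_mul, weightRoot_pow hM n.succ_ne_zero]

theorem weightRoot_le_mul_weightRoot (hM : ∀ n, 0 < M n) {i j k : ℕ} (hj : j ≠ 0)
    (h : M j ≤ M k ^ ((j : ℝ) / k) * M i ^ ((j : ℝ) / i)) :
    weightRoot M j ≤ weightRoot M k * weightRoot M i := by
  have hrpow (l : ℕ) : M l ^ ((j : ℝ) / l) = weightRoot M l ^ j := by
    rw [weightRoot, ← Real.rpow_mul_natCast (hM l).le, div_eq_inv_mul]
  refine le_of_pow_le_pow_left₀ hj (mul_pos (weightRoot_pos hM k) (weightRoot_pos hM i)).le ?_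
  rwa [weightRoot_pow hM hj, mul_pow, ← hrpow, ← hrpow]

theorem exists_weightRoot_le_mul (hM : ∀ n, 0 < M n) (hmono : MonotoneOn (weightRoot M) (Ici 1))
    {m₀ : ℝ} (hA : ∀ i j k : ℕ, m₀ < i → m₀ < k → i < j → (j : ℝ) / i < k →
      M j ≤ M k ^ ((j : ℝ) / k) * M i ^ ((j : ℝ) / i)) (c₀ : ℝ) :
    ∃ C : ℝ, ∀ᶠ n : ℕ in atTop, ∀ m : ℕ, (m : ℝ) ≤ c₀ * n → (n : ℝ) ≤ c₀ * m →
      weightRoot M m ≤ C * weightRoot M n := by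
  obtain ⟨k, hk⟩ := exists_nat_gt (max m₀ c₀)
  rw [max_lt_iff] at hk
  refine ⟨max 1 (weightRoot M k), ?_⟩
  filter_upwards [eventually_gt_atTop 0, tendsto_natCast_atTop_atTop.eventually_gt_atTop m₀]
    with n hn hm₀n m hmn hnm
  have hμ := weightRoot_pos hM n
  rcases le_or_gt m n with hle | hlt
  · have hm : m ≠ 0 := by
      rintro rfl
      rw [Nat.cast_zero, mul_zero, Nat.cast_nonpos] at hnm
      exact hn.ne' hnm
    calc weightRoot M m ≤ weightRoot M n := hmono (mem_Ici.2 (by lia)) (mem_Ici.2 hn) hle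
      _ ≤ max 1 (weightRoot M k) * weightRoot M n := le_mul_of_one_le_left hμ.le (le_max_left _ _)
  · have hratio : (m : ℝ) / n < k :=
      ((div_le_iff₀ (by positivity)).2 hmn).trans_lt hk.2
    calc weightRoot M m ≤ weightRoot M k * weightRoot M n :=
          weightRoot_le_mul_weightRoot hM (by lia) (hA n m k hm₀n hk.1 hlt hratio)
      _ ≤ max 1 (weightRoot M k) * weightRoot M n := by gcongr; exact le_max_right _ _

variable {E : Type*} [NormedAddCommGroup E] [NormedSpace ℝ E]

/-- Membership of `f` in the Denjoy–Carleman class of the weight sequence `M` on `s`.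
Derivatives are taken within `s`, hence one-sided at the endpoints of an interval; smoothness of `f`
is not part of the definition. -/
def MemDenjoyCarleman (M : ℕ → ℝ) (s : Set ℝ) (f : ℝ → E) : Prop :=
  ∃ K > 0, ∀ n : ℕ, ∀ x ∈ s, ‖iteratedDerivWithin n f s x‖ ≤ K ^ (n + 1) * M n

theorem MemDenjoyCarleman.of_eventually (hM : ∀ n, 0 < M n) {s : Set ℝ} (hs : IsCompact s)
    (hs_uniq : UniqueDiffOn ℝ s) {f : ℝ → E} (hf : ContDiffOn ℝ (⊤ : ℕ∞) f s) {K : ℝ}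
    (hK : ∀ᶠ n : ℕ in atTop, ∀ x ∈ s, ‖iteratedDerivWithin n f s x‖ ≤ K ^ (n + 1) * M n) :
    MemDenjoyCarleman M s f := by
  have hsingle (n : ℕ) : ∀ᶠ L : ℝ in atTop, ∀ x ∈ s,
      ‖iteratedDerivWithin n f s x‖ ≤ L ^ (n + 1) * M n := by
    obtain ⟨B, hB⟩ := hs.exists_bound_of_continuousOn
      (hf.continuousOn_iteratedDerivWithin (m := n) (by exact_mod_cast le_top) hs_uniq)
    have htendsto : Tendsto (fun L : ℝ => L ^ (n + 1) * M n) atTop atTop :=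
      (tendsto_pow_atTop n.succ_ne_zero).atTop_mul_const (hM n)
    filter_upwards [htendsto.eventually_ge_atTop B] with L hL x hx using (hB x hx).trans hL
  obtain ⟨n₀, hn₀⟩ := eventually_atTop.1 hK
  obtain ⟨L, hL_small, hKL, hL⟩ := (((Finset.range n₀).eventually_all.2 fun n _ => hsingle n).and
    ((eventually_ge_atTop |K|).and (eventually_gt_atTop 0))).exists
  refine ⟨L, hL, fun n x hx => ?_⟩
  rcases lt_or_ge n n₀ with hn | hn
  · exact hL_small n (Finset.mem_range.2 hn) x hx
  · calc ‖iteratedDerivWithin n f s x‖ ≤ K ^ (n + 1) * M n := hn₀ n hn x hx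
      _ ≤ L ^ (n + 1) * M n := by
        have hpow : K ^ (n + 1) ≤ L ^ (n + 1) :=
          (le_abs_self _).trans ((abs_pow K _).trans_le (pow_le_pow_left₀ (abs_nonneg K) hKL _))
        exact mul_le_mul_of_nonneg_right hpow (hM n).le

theorem norm_iteratedDerivWithin_le_of_weightRoot_le (hM : ∀ n, 0 < M n) {a b : ℝ} (hab : a < b)
    {f : ℝ → E} (hf : ContDiffOn ℝ (⊤ : ℕ∞) f (Icc a b)) {p l q : ℕ} (hp : p ≠ 0) (hpl : p ≤ l)
    (hlq : l < q) {C ε : ℝ} (hC : 1 ≤ C) (hpC : weightRoot M p ≤ C * weightRoot M l)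
    (hqC : weightRoot M q ≤ C * weightRoot M l) (hε : 0 < ε) (hε_one : ε ≤ 1)
    (hqε : 4 * (q * ε) ≤ weightRoot M l * (b - a))
    (hfp : ∀ x ∈ Icc a b, ‖iteratedDerivWithin p f (Icc a b) x‖ ≤ M p)
    (hfq : ∀ x ∈ Icc a b, ‖iteratedDerivWithin q f (Icc a b) x‖ ≤ M q) {x : ℝ}
    (hx : x ∈ Icc a b) :
    ‖iteratedDerivWithin l f (Icc a b) x‖ ≤ (2 * Real.exp 4 / ε) ^ q * C ^ l * M l := by
  have hμ := weightRoot_pos hM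
  have hweight {n : ℕ} (hn : n ≠ 0) (h : weightRoot M n ≤ C * weightRoot M l) :
      M n ≤ (C * weightRoot M l) ^ n :=
    (weightRoot_pow hM hn).symm.trans_le (pow_le_pow_left₀ (hμ n).le h n)
  have hsegment : 4 * (q * ε) ≤ C * weightRoot M l * (b - a) :=
    hqε.trans (mul_le_mul_of_nonneg_right (le_mul_of_one_le_left (hμ l).le hC)
      (sub_nonneg.2 hab.le))
  calc ‖iteratedDerivWithin l f (Icc a b) x‖
      ≤ (2 * Real.exp 4 / ε) ^ q * (C * weightRoot M l) ^ l :=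
        norm_iteratedDerivWithin_le_geometric hab hf hpl hlq
          (mul_pos (zero_lt_one.trans_le hC) (hμ l)) hε hε_one hsegment
          (fun y hy => (hfp y hy).trans (hweight hp hpC))
          (fun y hy => (hfq y hy).trans (hweight (by lia) hqC)) hx
    _ = (2 * Real.exp 4 / ε) ^ q * C ^ l * M l := by
        rw [mul_pow, weightRoot_pow hM (by lia), mul_assoc]

end DenjoyCarleman

theorem exists_mem_Ico_succ_of_tendsto {d : ℕ → ℕ} (hd : Tendsto d atTop atTop) {l : ℕ}
    (hl : d 0 ≤ l) : ∃ i, l ∈ Ico (d i) (d (i + 1)) := by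
  obtain ⟨N, hN⟩ := (hd.eventually_gt_atTop l).exists
  obtain ⟨i, -, hi⟩ := mem_iUnion₂.1 (Ico_subset_biUnion_Ico N d ⟨hl, hN⟩)
  exact ⟨i, hi⟩

theorem pow_mul_pow_le_pow_succ {D C : ℝ} (hD : 1 ≤ D) (hC : 1 ≤ C) {q l N : ℕ}
    (hq : q ≤ N * l) : D ^ q * C ^ l ≤ (D ^ N * C) ^ (l + 1) :=
  calc D ^ q * C ^ l ≤ D ^ (N * l) * C ^ l := by gcongr
    _ = (D ^ N * C) ^ l := by rw [mul_pow, ← pow_mul]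
    _ ≤ (D ^ N * C) ^ (l + 1) :=
      pow_le_pow_right₀ (one_le_mul_of_one_le_of_one_le (one_le_pow₀ hD) hC) l.le_succ

theorem exists_pos_le_one_forall_mul_le {c c₀ r : ℝ} (hc : 0 < c) (hc₀ : 0 < c₀) (hr : 0 < r) :
    ∃ ε : ℝ, 0 < ε ∧ ε ≤ 1 ∧
      ∀ l q μ : ℝ, 0 ≤ l → q ≤ c₀ * l → c * l ≤ μ → 4 * (q * ε) ≤ μ * r := by
  refine ⟨min 1 (c * r / (4 * c₀)), lt_min one_pos (by positivity), min_le_left _ _,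
    fun l q μ hl hq hμ => ?_⟩
  set ε := min 1 (c * r / (4 * c₀))
  have : 0 < ε := lt_min one_pos (by positivity)
  calc 4 * (q * ε) ≤ 4 * (c₀ * l * ε) := by gcongr
    _ = ε * (4 * c₀) * l := by ring
    _ ≤ c * r * l := by
      gcongr ?_ * _
      exact (le_div_iff₀ (mul_pos four_pos hc₀)).1 (min_le_right _ _)
    _ = c * l * r := by ring
    _ ≤ μ * r := by gcongr

theorem interpolation_DenjoyCarleman_general {E : Type*} [NormedAddCommGroup E] [NormedSpace ℝ E]
    {a b : ℝ} (hab : a < b) {M : ℕ → ℝ} (hM : ∀ n, 0 < M n) {c : ℝ} (hc : 0 < c)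
    (hB : ∀ n : ℕ, 1 ≤ n → c ^ n * (n : ℝ) ^ n ≤ M n) {d : ℕ → ℕ} (hd_pos : ∀ n, 0 < d n)
    (hd : Tendsto d atTop atTop) {c₀ : ℝ} (hgap : ∀ n, (d (n + 1) : ℝ) / d n ≤ c₀) {C : ℝ}
    (hC : ∀ᶠ n : ℕ in atTop, ∀ m : ℕ, (m : ℝ) ≤ c₀ * n → (n : ℝ) ≤ c₀ * m →
      weightRoot M m ≤ C * weightRoot M n)
    {f : ℝ → E} (hf : ContDiffOn ℝ (⊤ : ℕ∞) f (Icc a b))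
    (hbound : ∀ n, ∀ x ∈ Icc a b, ‖iteratedDerivWithin (d n) f (Icc a b) x‖ ≤ M (d n)) :
    MemDenjoyCarleman M (Icc a b) f := by
  have hc₀ : 0 < c₀ :=
    (div_pos (Nat.cast_pos.2 (hd_pos 1)) (Nat.cast_pos.2 (hd_pos 0))).trans_le (hgap 0)
  obtain ⟨ε, hε, hε_one, hfit⟩ := exists_pos_le_one_forall_mul_le hc hc₀ (sub_pos.2 hab)
  have hD : 1 ≤ 2 * Real.exp 4 / ε := one_le_two_mul_exp_four_div hε hε_one
  refine .of_eventually hM isCompact_Icc (uniqueDiffOn_Icc hab) hf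
    (K := (2 * Real.exp 4 / ε) ^ ⌈c₀⌉₊ * C) ?_
  filter_upwards [hC, eventually_ge_atTop (d 0)] with l hCl hl x hx
  obtain ⟨i, hpl, hlq⟩ := exists_mem_Ico_succ_of_tendsto hd hl
  have hp_pos := hd_pos i
  have hl_ne : l ≠ 0 := (hp_pos.trans_le hpl).ne'
  have hpl_real : (d i : ℝ) ≤ l := by exact_mod_cast hpl
  have hlq_real : (l : ℝ) ≤ d (i + 1) := by exact_mod_cast hlq.le
  have hqp : (d (i + 1) : ℝ) ≤ c₀ * d i := (div_le_iff₀ (Nat.cast_pos.2 hp_pos)).1 (hgap i)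
  have hp_le : c₀ * d i ≤ c₀ * l := by gcongr
  have hle_q : c₀ * l ≤ c₀ * d (i + 1) := by gcongr
  have hC_one : 1 ≤ C := le_of_mul_le_mul_right
    ((one_mul _).trans_le (hCl l (by linarith) (by linarith))) (weightRoot_pos hM l)
  have hsegment : 4 * (d (i + 1) * ε) ≤ weightRoot M l * (b - a) :=
    hfit l _ _ l.cast_nonneg (hqp.trans hp_le)
      (mul_natCast_le_weightRoot hM hl_ne (hB l (Nat.one_le_iff_ne_zero.2 hl_ne)))
  have hq_le : d (i + 1) ≤ ⌈c₀⌉₊ * l := by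
    have hceil : c₀ * l ≤ ⌈c₀⌉₊ * l := by gcongr; exact Nat.le_ceil c₀
    exact_mod_cast (hqp.trans hp_le).trans hceil
  calc ‖iteratedDerivWithin l f (Icc a b) x‖
      ≤ (2 * Real.exp 4 / ε) ^ d (i + 1) * C ^ l * M l :=
        norm_iteratedDerivWithin_le_of_weightRoot_le hM hab hf hp_pos.ne' hpl hlq hC_one
          (hCl _ (by linarith) (by linarith)) (hCl _ (by linarith) (by linarith))
          hε hε_one hsegment (hbound i) (hbound (i + 1)) hx
    _ ≤ ((2 * Real.exp 4 / ε) ^ ⌈c₀⌉₊ * C) ^ (l + 1) * M l :=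
        mul_le_mul_of_nonneg_right (pow_mul_pow_le_pow_succ hD hC_one hq_le) (hM l).le

/-- **Theorem 1 (main theorem).** If a smooth `f` on `[a,b]` satisfies
`max |f^(d n)| ≤ M (d n)` along a sequence `d` with bounded ratios
`d (n+1) / d n ≤ c₀`, and the log-convex sequence `M` satisfies the
interpolation condition (A) and contains the analytic class (B), then
`f` lies in the Denjoy–Carleman class `C^M([a,b])`. -/
theorem interpolation_DenjoyCarleman
    (a b : ℝ) (hab : a < b)
    (M : ℕ → ℝ) (hMpos : ∀ n, 0 < M n) (hM0 : M 0 = 1)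
    (hlogconv : ∀ n : ℕ, 1 ≤ n → (M n) ^ 2 ≤ M (n - 1) * M (n + 1))
    (m₀ : ℝ) (hm₀ : 0 ≤ m₀)
    (hA : ∀ i j k : ℕ, m₀ < (i : ℝ) → m₀ < (k : ℝ) → i < j → (j : ℝ) / (i : ℝ) < (k : ℝ) →
      M j ≤ (M k) ^ ((j : ℝ) / (k : ℝ)) * (M i) ^ ((j : ℝ) / (i : ℝ)))
    (c : ℝ) (hc : 0 < c)
    (hB : ∀ n : ℕ, 1 ≤ n → c ^ n * (n : ℝ) ^ n ≤ M n)
    (d : ℕ → ℕ) (hdpos : ∀ n, 0 < d n) (hdmono : StrictMono d)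
    (hdtop : Tendsto d atTop atTop)
    (c₀ : ℝ) (hc₀ : 0 < c₀)
    (hgap : ∀ n, (d (n + 1) : ℝ) / (d n : ℝ) ≤ c₀)
    (f : ℝ → ℝ) (hf : ContDiffOn ℝ (⊤ : ℕ∞) f (Icc a b))
    (hbound : ∀ n, ∀ x ∈ Icc a b, |iteratedDerivWithin (d n) f (Icc a b) x| ≤ M (d n)) :
    ∃ K > 0, ∀ n : ℕ, ∀ x ∈ Icc a b,
      |iteratedDerivWithin n f (Icc a b) x| ≤ K ^ (n + 1) * M n := by
  obtain ⟨C, hC⟩ :=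
    exists_weightRoot_le_mul hMpos
      (monotoneOn_weightRoot hMpos hM0.le fun n => hlogconv (n + 1) n.succ_pos) hA c₀
  exact interpolation_DenjoyCarleman_general hab hMpos hc hB hdpos hdtop hgap hC hf hbound
end

section
/- Let a < b, let f : [a,b] → ℝ be C^∞, let (d_n)_{n≥0} be a strictly increasing sequence of positive integers tending to infinity, and suppose there exists c > 0 such that max_{x∈[a,b]} |f^{(d_n)}(x)| ≤ c^{d_n} · d_n^{d_n} for every n. If f vanishes of infinite order at some point x_0 ∈ [a,b] (i.e. f^{(k)}(x_0) = 0 for every k ≥ 0), then f is identically zero on [a,b]. -/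
open Set Filter

/-!
At a point `x₀` of infinite order vanishing the Taylor polynomials of `f` are zero, so only the
remainder is left: the bound on the `n`-th derivative gives
`‖f x‖ ≤ (c n ‖x - x₀‖) ^ n / n! ≤ (c e ‖x - x₀‖) ^ n` for arbitrarily large `n`, hence `f x = 0` as
soon as `c e ‖x - x₀‖ < 1`. This radius is the same at every point, so infinite order vanishing
propagates through the whole (connected) domain.
-/

open scoped ContDiff Topology

variable {V E : Type*} [NormedAddCommGroup V] [NormedSpace ℝ V]
  [NormedAddCommGroup E] [NormedSpace ℝ E] {s : Set V} {f : V → E} {x y : V}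

/-- `f` vanishes of infinite order at `x` relative to `s`: all its iterated derivatives within `s`,
including `f` itself as the one of order `0`, are zero at `x`. -/
def FlatWithinAt (f : V → E) (s : Set V) (x : V) : Prop :=
  ∀ k : ℕ, iteratedFDerivWithin ℝ k f s x = 0

theorem flatWithinAt_iff_iteratedDerivWithin {f : ℝ → E} {s : Set ℝ} {x : ℝ} :
    FlatWithinAt f s x ↔ ∀ k : ℕ, iteratedDerivWithin k f s x = 0 := by
  refine forall_congr' fun k => ?_
  rw [← norm_eq_zero, norm_iteratedFDerivWithin_eq_norm_iteratedDerivWithin, norm_eq_zero]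

theorem FlatWithinAt.eq_zero (hflat : FlatWithinAt f s x) : f x = 0 := by
  rw [← norm_eq_zero, ← norm_iteratedFDerivWithin_zero (𝕜 := ℝ) (s := s), hflat 0, norm_zero]

theorem FlatWithinAt.of_eventuallyEq_zero (hf : f =ᶠ[𝓝[s] x] 0) (hx : x ∈ s) :
    FlatWithinAt f s x := fun k => by
  rw [hf.iteratedFDerivWithin_eq (hf.self_of_nhdsWithin hx), iteratedFDerivWithin_zero,
    Pi.zero_apply]

theorem norm_le_of_norm_fderivWithin_le_mul_pow (hs : Convex ℝ s) (hf : DifferentiableOn ℝ f s)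
    (hx : x ∈ s) (hfx : f x = 0) {C : ℝ} {n : ℕ}
    (hC : ∀ z ∈ s, ‖fderivWithin ℝ f s z‖ ≤ C * ‖z - x‖ ^ n) (hy : y ∈ s) :
    ‖f y‖ ≤ C * ‖y - x‖ ^ (n + 1) / (n + 1) := by
  set r := ‖y - x‖
  let γ : ℝ → V := AffineMap.lineMap x y
  have hγs : MapsTo γ (Icc 0 1) s := hs.mapsTo_lineMap hx hy
  have hfγ (t : ℝ) (ht : t ∈ Icc 0 1) :
      HasDerivWithinAt (f ∘ γ) (fderivWithin ℝ f s (γ t) (y - x)) (Icc 0 1) t :=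
    (hf (γ t) (hγs ht)).hasFDerivWithinAt.comp_hasDerivWithinAt t AffineMap.hasDerivWithinAt_lineMap
      hγs
  have hB (t : ℝ) : HasDerivAt (fun t => C * r ^ (n + 1) / (n + 1) * t ^ (n + 1))
      (C * r ^ (n + 1) * t ^ n) t := by
    convert! (hasDerivAt_pow (n + 1) t).const_mul (C * r ^ (n + 1) / (n + 1)) using 1
    push_cast [Nat.add_sub_cancel]
    field_simp
  have hbound (t : ℝ) (ht : t ∈ Ico 0 1) :
      ‖fderivWithin ℝ f s (γ t) (y - x)‖ ≤ C * r ^ (n + 1) * t ^ n :=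
    calc ‖fderivWithin ℝ f s (γ t) (y - x)‖
        ≤ ‖fderivWithin ℝ f s (γ t)‖ * r := ContinuousLinearMap.le_opNorm _ _
      _ ≤ C * ‖γ t - x‖ ^ n * r := by gcongr; exact hC _ (hγs (Ico_subset_Icc_self ht))
      _ = C * r ^ (n + 1) * t ^ n := by
        rw [← dist_eq_norm, dist_lineMap_left, Real.norm_of_nonneg ht.1, dist_eq_norm_sub']
        ring
  simpa [γ, r] using image_norm_le_of_norm_deriv_right_le_deriv_boundary
    (fun t ht => (hfγ t ht).continuousWithinAt)
    (fun t ht => (hfγ t (Ico_subset_Icc_self ht)).mono_of_mem_nhdsWithin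
      (Icc_mem_nhdsGE_of_mem ht))
    (by simp [γ, hfx]) hB hbound (right_mem_Icc.2 zero_le_one)

theorem norm_iteratedFDerivWithin_le_of_forall_eq_zero (hs : Convex ℝ s) (hu : UniqueDiffOn ℝ s)
    {k n : ℕ} (hf : ContDiffOn ℝ (k + n : ℕ) f s) (hx : x ∈ s)
    (hzero : ∀ i, k ≤ i → i < k + n → iteratedFDerivWithin ℝ i f s x = 0) {M : ℝ}
    (hM : ∀ z ∈ s, ‖iteratedFDerivWithin ℝ (k + n) f s z‖ ≤ M) (hy : y ∈ s) :
    ‖iteratedFDerivWithin ℝ k f s y‖ ≤ M * ‖y - x‖ ^ n / n.factorial := by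
  induction n generalizing k y with
  | zero => simpa using hM y hy
  | succ n ih =>
    have hkn : k + (n + 1) = k + 1 + n := by ring
    have hderiv (z : V) (hz : z ∈ s) : ‖fderivWithin ℝ (iteratedFDerivWithin ℝ k f s) s z‖
        ≤ M / n.factorial * ‖z - x‖ ^ n := by
      rw [norm_fderivWithin_iteratedFDerivWithin, div_mul_eq_mul_div]
      rw [hkn] at hf hzero hM
      exact ih hf (fun i hi => hzero i (by omega)) hM hz
    have hdiff : DifferentiableOn ℝ (iteratedFDerivWithin ℝ k f s) s :=
      hf.differentiableOn_iteratedFDerivWithin (by exact_mod_cast (by omega : k < k + (n + 1))) hu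
    convert! norm_le_of_norm_fderivWithin_le_mul_pow hs hdiff hx (hzero k le_rfl (by omega))
      hderiv hy using 1
    rw [Nat.factorial_succ]
    push_cast
    field_simp

section AnalyticBounds

variable {c : ℝ}

theorem FlatWithinAt.norm_le_pow (hs : Convex ℝ s) (hu : UniqueDiffOn ℝ s) {n : ℕ}
    (hf : ContDiffOn ℝ n f s) (hc : 0 ≤ c)
    (hbound : ∀ z ∈ s, ‖iteratedFDerivWithin ℝ n f s z‖ ≤ c ^ n * (n : ℝ) ^ n)
    (hx : x ∈ s) (hflat : FlatWithinAt f s x) (hy : y ∈ s) :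
    ‖f y‖ ≤ (c * Real.exp 1 * ‖y - x‖) ^ n := by
  have hexp : (n : ℝ) ^ n / n.factorial ≤ Real.exp 1 ^ n := by
    simpa [← Real.exp_nat_mul] using Real.pow_div_factorial_le_exp (n : ℝ) n.cast_nonneg n
  have htaylor : ‖iteratedFDerivWithin ℝ 0 f s y‖
      ≤ c ^ n * (n : ℝ) ^ n * ‖y - x‖ ^ n / n.factorial :=
    norm_iteratedFDerivWithin_le_of_forall_eq_zero hs hu (by rwa [zero_add]) hx
      (fun i _ _ => hflat i) (by rwa [zero_add]) hy
  calc ‖f y‖ ≤ c ^ n * (n : ℝ) ^ n * ‖y - x‖ ^ n / n.factorial := by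
        rwa [norm_iteratedFDerivWithin_zero] at htaylor
    _ = c ^ n * ((n : ℝ) ^ n / n.factorial) * ‖y - x‖ ^ n := by ring
    _ ≤ c ^ n * Real.exp 1 ^ n * ‖y - x‖ ^ n := by gcongr
    _ = (c * Real.exp 1 * ‖y - x‖) ^ n := by rw [mul_pow, mul_pow]

variable (hs : Convex ℝ s) (hu : UniqueDiffOn ℝ s) (hf : ContDiffOn ℝ ∞ f s) (hc : 0 ≤ c)
  (hbound : ∃ᶠ n : ℕ in atTop, ∀ z ∈ s, ‖iteratedFDerivWithin ℝ n f s z‖ ≤ c ^ n * (n : ℝ) ^ n)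

include hs hu hf hc hbound

theorem FlatWithinAt.eq_zero_of_norm_sub_lt (hx : x ∈ s) (hflat : FlatWithinAt f s x) (hy : y ∈ s)
    (hxy : c * Real.exp 1 * ‖y - x‖ < 1) : f y = 0 := by
  have hle : ∃ᶠ n : ℕ in atTop, ‖f y‖ ≤ (c * Real.exp 1 * ‖y - x‖) ^ n := hbound.mono fun n hn =>
    hflat.norm_le_pow hs hu (hf.of_le (mod_cast le_top)) hc hn hx hy
  have hlim : Tendsto (fun n : ℕ => (c * Real.exp 1 * ‖y - x‖) ^ n) atTop (𝓝 0) :=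
    tendsto_pow_atTop_nhds_zero_of_lt_one (by positivity) hxy
  exact norm_le_zero_iff.1 (ge_of_tendsto_of_frequently hlim hle)

theorem FlatWithinAt.of_norm_sub_lt (hx : x ∈ s) (hflat : FlatWithinAt f s x) (hy : y ∈ s)
    (hxy : c * Real.exp 1 * ‖y - x‖ < 1) : FlatWithinAt f s y := by
  have hcont : Continuous fun z => c * Real.exp 1 * ‖z - x‖ := by fun_prop
  have hball : ∀ᶠ z in 𝓝[s] y, c * Real.exp 1 * ‖z - x‖ < 1 :=
    hcont.continuousWithinAt.eventually_lt_const hxy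
  refine .of_eventuallyEq_zero ?_ hy
  filter_upwards [self_mem_nhdsWithin, hball] with z hz hzx
  exact hflat.eq_zero_of_norm_sub_lt hs hu hf hc hbound hx hz hzx

theorem FlatWithinAt.of_frequently_norm_iteratedFDerivWithin_le (hx : x ∈ s)
    (hflat : FlatWithinAt f s x) (hy : y ∈ s) : FlatWithinAt f s y := by
  refine hs.isPreconnected.induction₂' (fun u v => FlatWithinAt f s u → FlatWithinAt f s v)
    (fun u hus => ?_) (fun _ _ _ _ _ _ huv hvw => hvw ∘ huv) hx hy hflat
  have hcont : Continuous fun v => c * Real.exp 1 * ‖v - u‖ := by fun_prop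
  have hball : ∀ᶠ v in 𝓝[s] u, c * Real.exp 1 * ‖v - u‖ < 1 :=
    hcont.continuousWithinAt.eventually_lt_const (by simp)
  filter_upwards [self_mem_nhdsWithin, hball] with v hvs huv
  exact ⟨fun h => h.of_norm_sub_lt hs hu hf hc hbound hus hvs huv,
    fun h => h.of_norm_sub_lt hs hu hf hc hbound hvs hus (by rwa [norm_sub_rev])⟩

end AnalyticBounds

theorem quasianalyticity_of_analytic_bounds_general (hs : Convex ℝ s) (hu : UniqueDiffOn ℝ s)
    (hf : ContDiffOn ℝ ∞ f s) {c : ℝ} (hc : 0 ≤ c)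
    (hbound : ∃ᶠ n : ℕ in atTop, ∀ z ∈ s,
      ‖iteratedFDerivWithin ℝ n f s z‖ ≤ c ^ n * (n : ℝ) ^ n)
    (hx : x ∈ s) (hflat : FlatWithinAt f s x) : EqOn f 0 s := fun _ hy =>
  (hflat.of_frequently_norm_iteratedFDerivWithin_le hs hu hf hc hbound hx hy).eq_zero

/-- **Proposition 1.** If a smooth `f` on `[a,b]` satisfies
`max |f^(d n)| ≤ c^(d n) * (d n)^(d n)` along an increasing divergent sequence `d`
and vanishes of infinite order at a point `x₀ ∈ [a,b]`, then `f ≡ 0` on `[a,b]`. -/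
theorem quasianalyticity_of_analytic_bounds
    (a b : ℝ) (hab : a < b)
    (f : ℝ → ℝ) (hf : ContDiffOn ℝ (⊤ : ℕ∞) f (Icc a b))
    (d : ℕ → ℕ) (hdpos : ∀ n, 0 < d n) (hdmono : StrictMono d)
    (hdtop : Tendsto d atTop atTop)
    (c : ℝ) (hc : 0 < c)
    (hbound : ∀ n, ∀ x ∈ Icc a b,
      |iteratedDerivWithin (d n) f (Icc a b) x| ≤ c ^ (d n) * (d n : ℝ) ^ (d n))
    (x₀ : ℝ) (hx₀ : x₀ ∈ Icc a b)
    (hvan : ∀ k : ℕ, iteratedDerivWithin k f (Icc a b) x₀ = 0) :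
    ∀ x ∈ Icc a b, f x = 0 := by
  have hfreq : ∃ᶠ n : ℕ in atTop, ∀ x ∈ Icc a b,
      ‖iteratedFDerivWithin ℝ n f (Icc a b) x‖ ≤ c ^ n * (n : ℝ) ^ n :=
    hdtop.frequently <| .of_forall <| by
      simpa only [norm_iteratedFDerivWithin_eq_norm_iteratedDerivWithin, Real.norm_eq_abs]
        using hbound
  exact quasianalyticity_of_analytic_bounds_general (convex_Icc a b) (uniqueDiffOn_Icc hab) hf hc.le
    hfreq hx₀ (flatWithinAt_iff_iteratedDerivWithin.2 hvan)
end

section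
/- Let a < b and let (M_n)_{n≥0} be an arbitrary sequence of positive real numbers such that limsup_{n→∞} M_n^{1/n} = +∞. Then there exist a strictly increasing sequence of positive integers (d_n)_{n≥0} tending to infinity and a function f ∈ C^∞([a,b]) such that max_{x∈[a,b]} |f^{(d_n)}(x)| ≤ M_{d_n} for every n, yet f does not belong to the Denjoy–Carleman class C^M([a,b]); that is, for every K > 0 there exists n ≥ 0 with max_{x∈[a,b]} |f^{(n)}(x)| > K^{n+1} M_n. -/
open Set Filter

/-!
The function is a lacunary series `f x = ∑ k, c k * (cos (w k * (x - a)) + sin (w k * (x - a)))`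
with nonnegative coefficients. All derivatives of `cos + sin` are bounded by `2`, and at `0` they
are `±1`; hence `|f^(j)| ≤ 2 * ∑ k, c k * w k ^ j` everywhere, and since the terms of `f^(j) a` all
have the same sign, `|f^(j) a| = ∑ k, c k * w k ^ j`.

Up to the weight `2 ^ (-k - 2)`, the coefficient `c k` is `M (d k) / w k ^ d k`, so that the `k`-th
term contributes about `M (d k)` to the derivative of order `d k` and about `M (d k) * w k` to the
next one. Taking `w k` large makes the latter as big as desired, which keeps `f` out of the class,
and makes the contribution to the orders below `d k` small. The contribution to the orders `d n`
with `n > k` grows only geometrically, like `w k ^ d n`, so the assumption on `M` lets one choose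
`d n` with `M (d n)` dominating it.
-/

open Asymptotics
open scoped ContDiff

section DilateSeries

variable {ι E : Type*} [NormedAddCommGroup E] [NormedSpace ℝ E]

/-- The series `∑ k, c k • φ (w k * (x - a))` of dilates of a profile `φ` about the point `a`, with
coefficients `c` and frequencies `w`. Where the series diverges its value is the junk value `0`. -/
noncomputable def dilateSeries (c w : ι → ℝ) (φ : ℝ → E) (a x : ℝ) : E :=
  ∑' k, c k • φ (w k * (x - a))

variable {c w : ι → ℝ} {φ : ℝ → E}

lemma dilateSeries_self (hc : Summable c) (a : ℝ) :
    dilateSeries c w φ a a = (∑' k, c k) • φ 0 := by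
  simp only [dilateSeries, sub_self, mul_zero, hc.tsum_smul_const]

lemma norm_dilateSeries_le {b : ℝ} (hφ : ∀ x, ‖φ x‖ ≤ b) (hc : Summable c) (a x : ℝ) :
    ‖dilateSeries c w φ a x‖ ≤ b * ∑' k, ‖c k‖ := by
  rw [← tsum_mul_left]
  refine tsum_of_norm_bounded (hc.norm.mul_left b).hasSum fun k => ?_
  rw [norm_smul, mul_comm]
  gcongr
  exact hφ _

lemma iteratedDeriv_const_smul_comp_mul_sub {j : ℕ} (hφ : ContDiff ℝ j φ) (c w a x : ℝ) :
    iteratedDeriv j (fun y => c • φ (w * (y - a))) x =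
      (c * w ^ j) • iteratedDeriv j φ (w * (x - a)) := by
  rw [iteratedDeriv_fun_const_smul_field,
    congrFun (iteratedDeriv_comp_sub_const j (fun z => φ (w * z)) a) x,
    iteratedDeriv_comp_const_smul hφ, mul_smul]

lemma norm_iteratedFDeriv_const_smul_comp_mul_sub_le {j : ℕ} {b : ℝ} (hφ : ContDiff ℝ j φ)
    (hb : ∀ x, ‖iteratedDeriv j φ x‖ ≤ b) (c w a x : ℝ) :
    ‖iteratedFDeriv ℝ j (fun y => c • φ (w * (y - a))) x‖ ≤ b * ‖c * w ^ j‖ := by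
  rw [norm_iteratedFDeriv_eq_norm_iteratedDeriv, iteratedDeriv_const_smul_comp_mul_sub hφ,
    norm_smul, mul_comm]
  gcongr
  exact hb _

variable [CompleteSpace E] {B : ℕ → ℝ}

lemma contDiff_dilateSeries (hφ : ContDiff ℝ ∞ φ) (hB : ∀ j x, ‖iteratedDeriv j φ x‖ ≤ B j)
    (hcw : ∀ j : ℕ, Summable fun k => c k * w k ^ j) (a : ℝ) :
    ContDiff ℝ ∞ (dilateSeries c w φ a) :=
  contDiff_tsum (N := ⊤) (f := fun k x => c k • φ (w k * (x - a))) (fun k => by fun_prop)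
    (fun j _ => (hcw j).norm.mul_left (B j))
    fun j k x _ => norm_iteratedFDeriv_const_smul_comp_mul_sub_le (contDiff_infty.1 hφ j) (hB j)
      (c k) (w k) a x

lemma iteratedDeriv_dilateSeries (hφ : ContDiff ℝ ∞ φ)
    (hB : ∀ j x, ‖iteratedDeriv j φ x‖ ≤ B j)
    (hcw : ∀ j : ℕ, Summable fun k => c k * w k ^ j) (a : ℝ) (j : ℕ) :
    iteratedDeriv j (dilateSeries c w φ a) =
      dilateSeries (fun k => c k * w k ^ j) w (iteratedDeriv j φ) a := by
  have hterm (i : ℕ) (k : ι) (y : ℝ) :=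
    norm_iteratedFDeriv_const_smul_comp_mul_sub_le (contDiff_infty.1 hφ i) (hB i) (c k) (w k) a y
  have hbound (i : ℕ) : Summable fun k => B i * ‖c k * w k ^ i‖ := (hcw i).norm.mul_left (B i)
  funext x
  calc iteratedDeriv j (dilateSeries c w φ a) x
      = (∑' k, iteratedFDeriv ℝ j (fun y => c k • φ (w k * (y - a))) x) fun _ => 1 := by
        rw [iteratedDeriv_eq_iteratedFDeriv]
        congr 1
        exact iteratedFDeriv_tsum_apply (N := ⊤) (f := fun k y => c k • φ (w k * (y - a)))
          (fun k => by fun_prop) (fun i _ => hbound i) (fun i k y _ => hterm i k y) le_top x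
    _ = ∑' k, iteratedDeriv j (fun y => c k • φ (w k * (y - a))) x := by
        simp_rw [iteratedDeriv_eq_iteratedFDeriv]
        have hsum : Summable fun k => iteratedFDeriv ℝ j (fun y => c k • φ (w k * (y - a))) x :=
          .of_norm_bounded (hbound j) fun k => hterm j k x
        exact ContinuousMultilinearMap.tsum_eval hsum _
    _ = dilateSeries (fun k => c k * w k ^ j) w (iteratedDeriv j φ) a x := by
        simp_rw [iteratedDeriv_const_smul_comp_mul_sub (contDiff_infty.1 hφ j), dilateSeries]

end DilateSeries

section CosAddSin

lemma iteratedDeriv_cos_add_sin (j : ℕ) (x : ℝ) :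
    iteratedDeriv j (Real.cos + Real.sin) x =
      iteratedDeriv j Real.cos x + iteratedDeriv j Real.sin x :=
  iteratedDeriv_add Real.contDiff_cos.contDiffAt Real.contDiff_sin.contDiffAt

lemma norm_iteratedDeriv_cos_add_sin_le (j : ℕ) (x : ℝ) :
    ‖iteratedDeriv j (Real.cos + Real.sin) x‖ ≤ 2 := by
  rw [iteratedDeriv_cos_add_sin, Real.norm_eq_abs]
  linarith [abs_add_le (iteratedDeriv j Real.cos x) (iteratedDeriv j Real.sin x),
    Real.abs_iteratedDeriv_cos_le_one j x, Real.abs_iteratedDeriv_sin_le_one j x]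

lemma abs_iteratedDeriv_cos_add_sin_zero (j : ℕ) :
    |iteratedDeriv j (Real.cos + Real.sin) 0| = 1 := by
  rw [iteratedDeriv_cos_add_sin]
  obtain ⟨i, rfl | rfl⟩ := j.even_or_odd'
  · simp
  · simp

lemma exists_contDiff_iteratedDeriv_of_summable {ι : Type*} {c w : ι → ℝ}
    (hcw : ∀ j : ℕ, Summable fun k => c k * w k ^ j) (a : ℝ) :
    ∃ f : ℝ → ℝ, ContDiff ℝ ∞ f ∧
      (∀ j x, |iteratedDeriv j f x| ≤ 2 * ∑' k, |c k * w k ^ j|) ∧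
      ∀ j, |iteratedDeriv j f a| = |∑' k, c k * w k ^ j| := by
  have hφ : ContDiff ℝ ∞ (Real.cos + Real.sin) := Real.contDiff_cos.add Real.contDiff_sin
  have hφ_le := norm_iteratedDeriv_cos_add_sin_le
  refine ⟨dilateSeries c w (Real.cos + Real.sin) a, contDiff_dilateSeries hφ hφ_le hcw a,
    fun j x => ?_, fun j => ?_⟩
  · rw [iteratedDeriv_dilateSeries hφ hφ_le hcw]
    exact norm_dilateSeries_le (hφ_le j) (hcw j) a x
  · rw [iteratedDeriv_dilateSeries hφ hφ_le hcw, dilateSeries_self (hcw j), smul_eq_mul, abs_mul,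
      abs_iteratedDeriv_cos_add_sin_zero, mul_one]

end CosAddSin

section GeometricWeights

lemma hasSum_div_two_pow_add_two (C : ℝ) : HasSum (fun k : ℕ => C / 2 ^ (k + 2)) (C / 2) := by
  convert hasSum_geometric_two' (C / 2) using 2 with k
  ring

lemma abs_div_two_pow_le {y C : ℝ} (hy : |y| ≤ C) (k : ℕ) : |y / 2 ^ k| ≤ C / 2 ^ k := by
  rw [abs_div, abs_pow, abs_two]
  gcongr

variable {x : ℕ → ℝ} {C : ℝ}

lemma summable_div_two_pow_add_two (hx : ∀ k, |x k| ≤ C) : Summable fun k => x k / 2 ^ (k + 2) :=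
  (hasSum_div_two_pow_add_two C).summable.of_norm_bounded fun k => abs_div_two_pow_le (hx k) _

lemma tsum_abs_div_two_pow_add_two_le (hx : ∀ k, |x k| ≤ C) :
    ∑' k, |x k / 2 ^ (k + 2)| ≤ C / 2 :=
  hasSum_le (fun k => abs_div_two_pow_le (hx k) _) (summable_div_two_pow_add_two hx).abs.hasSum
    (hasSum_div_two_pow_add_two C)

end GeometricWeights

section Lacunary

variable {M : ℕ → ℝ}

lemma frequently_pow_lt_of_frequently_lt_rpow (hM : ∀ n, 0 ≤ M n) {C : ℝ} (hC : 0 ≤ C)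
    (h : ∃ᶠ n : ℕ in atTop, C < M n ^ ((1 : ℝ) / (n : ℝ))) : ∃ᶠ n in atTop, C ^ n < M n := by
  refine (h.and_eventually (eventually_ne_atTop 0)).mono fun n ⟨hn, hn0⟩ => ?_
  calc C ^ n < (M n ^ ((1 : ℝ) / n)) ^ n := pow_lt_pow_left₀ hn hC hn0
    _ = M n := by rw [one_div, Real.rpow_inv_natCast_pow (hM n) hn0]

lemma frequently_forall_mul_pow_lt (hM : ∀ C ≥ 0, ∃ᶠ n in atTop, C ^ n < M n) {ι : Type*}
    (s : Finset ι) (A w : ι → ℝ) : ∃ᶠ n in atTop, ∀ j ∈ s, A j * w j ^ n < M n := by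
  obtain ⟨C, hC, hwC⟩ : ∃ C : ℝ, 0 ≤ C ∧ ∀ j ∈ s, |w j| < C :=
    ((eventually_ge_atTop 0).and
      ((eventually_all_finset s).2 fun j _ => eventually_gt_atTop |w j|)).exists
  have hAC : ∀ᶠ n in atTop, ∀ j ∈ s, A j * w j ^ n ≤ C ^ n := by
    refine (eventually_all_finset s).2 fun j hj => ?_
    have hlittle : (fun n => A j * w j ^ n) =o[atTop] fun n => C ^ n :=
      (isLittleO_pow_pow_of_abs_lt_left ((hwC j hj).trans_le (le_abs_self C))).const_mul_left _
    filter_upwards [hlittle.bound one_pos] with n hn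
    rw [one_mul, Real.norm_of_nonneg (pow_nonneg hC n)] at hn
    exact (le_abs_self _).trans hn
  exact ((hM C hC).and_eventually hAC).mono fun n ⟨hn, hAn⟩ j hj => (hAn j hj).trans_lt hn

lemma exists_strictMono_forall_lt_mul_pow_lt (hM : ∀ C ≥ 0, ∃ᶠ n in atTop, C ^ n < M n)
    (A w : ℕ → ℝ) :
    ∃ d : ℕ → ℕ, (∀ n, 0 < d n) ∧ StrictMono d ∧
      ∀ k n, k < n → A (d k) * w (d k) ^ d n < M (d n) := by
  obtain ⟨d, hd, hdr⟩ := exists_seq_of_forall_finset_exists (0 < ·)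
    (fun j n => j < n ∧ A j * w j ^ n < M n) fun s _ => by
      obtain ⟨n, hAn, hn, hsn⟩ := ((frequently_forall_mul_pow_lt hM s A w).and_eventually
        ((eventually_gt_atTop 0).and
          ((eventually_all_finset s).2 fun j _ => eventually_gt_atTop j))).exists
      exact ⟨n, hn, fun j hj => ⟨hsn j hj, hAn j hj⟩⟩
  exact ⟨d, hd, fun k n hkn => (hdr k n hkn).1, fun k n hkn => (hdr k n hkn).2⟩

lemma exists_one_le_forall_lt_div_pow_mul_pow_lt (hM : ∀ n, 0 < M n) (L : ℝ) (m : ℕ) :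
    ∃ w : ℝ, 1 ≤ w ∧ (∀ n < m, M m / w ^ m * w ^ n < M n) ∧ L < M m * w := by
  have hsmall : ∀ᶠ w : ℝ in atTop, ∀ n ∈ Finset.range m, M m * (w ^ n / w ^ m) < M n := by
    refine (eventually_all_finset _).2 fun n hn => ?_
    have hlim := (tendsto_pow_div_pow_atTop_zero (𝕜 := ℝ) (Finset.mem_range.1 hn)).const_mul (M m)
    rw [mul_zero] at hlim
    exact hlim.eventually_lt_const (hM n)
  have hlarge : ∀ᶠ w : ℝ in atTop, L < M m * w :=
    (tendsto_id.const_mul_atTop (hM m)).eventually_gt_atTop L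
  obtain ⟨w, hw, hwsmall, hwlarge⟩ :=
    ((eventually_ge_atTop 1).and (hsmall.and hlarge)).exists
  refine ⟨w, hw, fun n hn => ?_, hwlarge⟩
  rw [div_mul_eq_mul_div, mul_div_assoc]
  exact hwsmall n (Finset.mem_range.2 hn)

lemma exists_lacunary_amplitudes (hM : ∀ n, 0 < M n)
    (hfreq : ∀ C ≥ 0, ∃ᶠ n in atTop, C ^ n < M n) (L : ℕ → ℝ) :
    ∃ (d : ℕ → ℕ) (A w : ℕ → ℝ), (∀ n, 0 < d n) ∧ StrictMono d ∧ (∀ k, 0 ≤ A k) ∧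
      (∀ k, 1 ≤ w k) ∧ (∀ k n, A k * w k ^ d n ≤ M (d n)) ∧
      ∀ k, L (d k) < A k * w k ^ (d k + 1) := by
  choose w hw hw_lt hwL using fun m => exists_one_le_forall_lt_div_pow_mul_pow_lt hM (L m) m
  have hw_pos (m : ℕ) : 0 < w m := zero_lt_one.trans_le (hw m)
  have hpeak (m : ℕ) : M m / w m ^ m * w m ^ m = M m :=
    div_mul_cancel₀ _ (pow_pos (hw_pos m) m).ne'
  obtain ⟨d, hd, hd_mono, hd_lt⟩ :=
    exists_strictMono_forall_lt_mul_pow_lt hfreq (fun m => M m / w m ^ m) w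
  refine ⟨d, fun k => M (d k) / w (d k) ^ d k, fun k => w (d k), hd, hd_mono,
    fun k => div_nonneg (hM _).le (pow_pos (hw_pos _) _).le, fun k => hw _, fun k n => ?_,
    fun k => ?_⟩
  · rcases lt_trichotomy k n with hkn | rfl | hnk
    · exact (hd_lt k n hkn).le
    · exact (hpeak _).le
    · exact (hw_lt _ _ (hd_mono hnk)).le
  · rw [pow_succ, ← mul_assoc, hpeak]
    exact hwL _

lemma exists_lacunary_coefficients (hM : ∀ n, 0 < M n)
    (hfreq : ∀ C ≥ 0, ∃ᶠ n in atTop, C ^ n < M n) (L : ℕ → ℝ) :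
    ∃ (d : ℕ → ℕ) (c w : ℕ → ℝ), (∀ n, 0 < d n) ∧ StrictMono d ∧
      (∀ j : ℕ, Summable fun k => c k * w k ^ j) ∧
      (∀ n, ∑' k, |c k * w k ^ d n| ≤ M (d n) / 2) ∧
      ∀ n, L (d n) < ∑' k, c k * w k ^ (d n + 1) := by
  obtain ⟨d, A, w, hd, hd_mono, hA, hw, hAM, hL⟩ :=
    exists_lacunary_amplitudes hM hfreq fun m => 2 ^ (m + 2) * |L m|
  have hAw (j k : ℕ) : 0 ≤ A k * w k ^ j :=
    mul_nonneg (hA k) (pow_nonneg (zero_le_one.trans (hw k)) j)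
  have hAw_le {j n : ℕ} (hj : j ≤ d n) (k : ℕ) : |A k * w k ^ j| ≤ M (d n) := by
    calc |A k * w k ^ j| = A k * w k ^ j := abs_of_nonneg (hAw j k)
      _ ≤ A k * w k ^ d n := mul_le_mul_of_nonneg_left (pow_le_pow_right₀ (hw k) hj) (hA k)
      _ ≤ M (d n) := hAM k n
  have hsum (j : ℕ) : Summable fun k => A k * w k ^ j / 2 ^ (k + 2) :=
    summable_div_two_pow_add_two (hAw_le hd_mono.le_apply)
  refine ⟨d, fun k => A k / 2 ^ (k + 2), w, hd, hd_mono, ?_⟩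
  simp only [div_mul_eq_mul_div]
  refine ⟨hsum, fun n => tsum_abs_div_two_pow_add_two_le (hAw_le le_rfl), fun n => ?_⟩
  calc L (d n) ≤ |L (d n)| := le_abs_self _
    _ < A n * w n ^ (d n + 1) / 2 ^ (d n + 2) := by
        rw [lt_div_iff₀' (by positivity)]
        exact hL n
    _ ≤ A n * w n ^ (d n + 1) / 2 ^ (n + 2) := by
        gcongr
        exacts [hAw _ n, one_le_two, hd_mono.le_apply]
    _ ≤ ∑' k, A k * w k ^ (d n + 1) / 2 ^ (k + 2) :=
        (hsum _).le_tsum n fun k _ => div_nonneg (hAw _ k) (by positivity)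

end Lacunary

theorem exists_contDiff_abs_iteratedDeriv_le_and_lt {M : ℕ → ℝ} (hM : ∀ n, 0 < M n)
    (hfreq : ∀ C ≥ 0, ∃ᶠ n in atTop, C ^ n < M n) (L : ℕ → ℝ) (a : ℝ) :
    ∃ (d : ℕ → ℕ) (f : ℝ → ℝ), (∀ n, 0 < d n) ∧ StrictMono d ∧ ContDiff ℝ ∞ f ∧
      (∀ n x, |iteratedDeriv (d n) f x| ≤ M (d n)) ∧
      ∀ n, L (d n) < |iteratedDeriv (d n + 1) f a| := by
  obtain ⟨d, c, w, hd, hd_mono, hcw, hcw_le, hcw_lt⟩ := exists_lacunary_coefficients hM hfreq L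
  obtain ⟨f, hf, hf_le, hf_a⟩ := exists_contDiff_iteratedDeriv_of_summable hcw a
  refine ⟨d, f, hd, hd_mono, hf, fun n x => ?_, fun n => ?_⟩
  · linarith [hf_le (d n) x, hcw_le n]
  · rw [hf_a]
    exact (hcw_lt n).trans_le (le_abs_self _)

theorem counterexample_without_gap_condition_general {s : Set ℝ} (hs : UniqueDiffOn ℝ s)
    (hne : s.Nonempty) {M : ℕ → ℝ} (hMpos : ∀ n, 0 < M n)
    (hlimsup : ∀ C : ℝ, ∃ᶠ n : ℕ in atTop, C < (M n) ^ ((1 : ℝ) / (n : ℝ))) :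
    ∃ (d : ℕ → ℕ) (f : ℝ → ℝ),
      (∀ n, 0 < d n) ∧ StrictMono d ∧ Tendsto d atTop atTop ∧
      ContDiffOn ℝ (⊤ : ℕ∞) f s ∧
      (∀ n, ∀ x ∈ s, |iteratedDerivWithin (d n) f s x| ≤ M (d n)) ∧
      (∀ K > (0 : ℝ), ∃ n : ℕ, ∃ x ∈ s,
        K ^ (n + 1) * M n < |iteratedDerivWithin n f s x|) := by
  obtain ⟨a, ha⟩ := hne
  obtain ⟨d, f, hd, hd_mono, hf, hle, hlt⟩ := exists_contDiff_abs_iteratedDeriv_le_and_lt hMpos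
    (fun C hC => frequently_pow_lt_of_frequently_lt_rpow (fun n => (hMpos n).le) hC (hlimsup C))
    (fun m => (m : ℝ) ^ (m + 2) * M (m + 1)) a
  have hwithin (j : ℕ) {x : ℝ} (hx : x ∈ s) :
      iteratedDerivWithin j f s x = iteratedDeriv j f x :=
    iteratedDerivWithin_eq_iteratedDeriv hs (contDiff_infty.1 hf j).contDiffAt hx
  refine ⟨d, f, hd, hd_mono, hd_mono.tendsto_atTop, hf.contDiffOn,
    fun n x hx => hwithin (d n) hx ▸ hle n x, fun K hK => ?_⟩
  obtain ⟨k, hk⟩ := exists_nat_ge K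
  have hKd : K ≤ d k := hk.trans (mod_cast hd_mono.le_apply)
  have hMk := hMpos (d k + 1)
  refine ⟨d k + 1, a, ha, ?_⟩
  calc K ^ (d k + 2) * M (d k + 1) ≤ (d k : ℝ) ^ (d k + 2) * M (d k + 1) := by gcongr
    _ < |iteratedDeriv (d k + 1) f a| := hlt k
    _ = |iteratedDerivWithin (d k + 1) f s a| := by rw [hwithin _ ha]

/-- **Theorem 2.** If `limsup M n ^ (1/n) = +∞` (stated equivalently: `M n ^ (1/n)`
exceeds every constant frequently), then there are an increasing divergent sequence `d`
of positive integers and a smooth function `f` on `[a,b]` with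
`max |f^(d n)| ≤ M (d n)` for all `n`, but `f ∉ C^M([a,b])`. -/
theorem counterexample_without_gap_condition
    (a b : ℝ) (hab : a < b)
    (M : ℕ → ℝ) (hMpos : ∀ n, 0 < M n)
    (hlimsup : ∀ C : ℝ, ∃ᶠ n : ℕ in atTop, C < (M n) ^ ((1 : ℝ) / (n : ℝ))) :
    ∃ (d : ℕ → ℕ) (f : ℝ → ℝ),
      (∀ n, 0 < d n) ∧ StrictMono d ∧ Tendsto d atTop atTop ∧
      ContDiffOn ℝ (⊤ : ℕ∞) f (Icc a b) ∧
      (∀ n, ∀ x ∈ Icc a b, |iteratedDerivWithin (d n) f (Icc a b) x| ≤ M (d n)) ∧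
      (∀ K > (0 : ℝ), ∃ n : ℕ, ∃ x ∈ Icc a b,
        K ^ (n + 1) * M n < |iteratedDerivWithin n f (Icc a b) x|) :=
  counterexample_without_gap_condition_general (uniqueDiffOn_Icc hab) (nonempty_Icc.2 hab.le)
    hMpos hlimsup
end

section
/- (Cartan–Gorny inequality) Let a < b, let m ≥ 2 be an integer, and let g : [a,b] → ℝ be m times differentiable with G_ℓ := sup_{x∈[a,b]} |g^{(ℓ)}(x)| finite for ℓ = 0 and ℓ = m. Then for every integer k with 1 ≤ k ≤ m−1, G_k ≤ 2 · (e^2 m / k)^k · G_0^{1−k/m} · ( max{ m! · G_0 · (2/(b−a))^m , G_m } )^{k/m}. -/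
open Set

/-!
A norming functional reduces the inequality to real-valued `g`. From a point `x` of `[a, b]` one
can move by any `h ≤ (b - a) / 2` in one of the two directions without leaving the interval.
Write `M` for the maximum in the statement and take `h ^ m = m! * G 0 / M`. On the segment so
obtained the Taylor remainder of order `m` at `x` is at most `G 0`, so the Taylor polynomial of
degree `m - 1` is bounded by `2 * G 0`. Its `k`-th derivative at `x`, which is that of `g`, is
then controlled by V. A. Markov's inequality at an endpoint, whose extremal polynomial is the
Chebyshev polynomial `T`. The constant comes from the formula for the `k`-th derivative of `T` at
`1`, together with `(2 * k) ^ k ≤ e ^ k * (1 * 3 * ⋯ * (2 * k - 1))` and `(m / e) ^ m ≤ m!`.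
-/

section FactorialEstimates

theorem add_one_pow_self_le_exp_one_mul_pow (n : ℕ) :
    ((n : ℝ) + 1) ^ n ≤ Real.exp 1 * (n : ℝ) ^ n := by
  rcases n.eq_zero_or_pos with rfl | hn
  · simp
  have hn' : (0 : ℝ) < n := by exact_mod_cast hn
  calc ((n : ℝ) + 1) ^ n = ((n : ℝ)⁻¹ + 1) ^ n * (n : ℝ) ^ n := by
        rw [← mul_pow, add_mul, inv_mul_cancel₀ hn'.ne', one_mul, add_comm]
    _ ≤ Real.exp (n : ℝ)⁻¹ ^ n * (n : ℝ) ^ n := by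
        gcongr
        exact Real.add_one_le_exp _
    _ = Real.exp 1 * (n : ℝ) ^ n := by rw [← Real.exp_nat_mul, mul_inv_cancel₀ hn'.ne']

theorem monotone_factorial_mul_exp_div_pow_self :
    Monotone fun n : ℕ => (n.factorial : ℝ) * Real.exp n / (n : ℝ) ^ n := by
  refine monotone_nat_of_le_succ fun n => ?_
  have hn : 0 < (n : ℝ) ^ n := by exact_mod_cast Nat.pow_self_pos
  rw [div_le_div_iff₀ hn (by positivity), Nat.factorial_succ]
  push_cast
  calc (n.factorial : ℝ) * Real.exp n * ((n : ℝ) + 1) ^ (n + 1)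
      = n.factorial * Real.exp n * (n + 1) * ((n : ℝ) + 1) ^ n := by ring
    _ ≤ n.factorial * Real.exp n * (n + 1) * (Real.exp 1 * (n : ℝ) ^ n) := by
        gcongr
        exact add_one_pow_self_le_exp_one_mul_pow n
    _ = (n + 1) * n.factorial * Real.exp (n + 1) * (n : ℝ) ^ n := by rw [Real.exp_add]; ring

theorem div_exp_one_pow_self_le_factorial (n : ℕ) :
    ((n : ℝ) / Real.exp 1) ^ n ≤ n.factorial := by
  have hn : 0 < (n : ℝ) ^ n := by exact_mod_cast Nat.pow_self_pos
  have h := monotone_factorial_mul_exp_div_pow_self n.zero_le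
  simp only [Nat.factorial_zero, Nat.cast_zero, pow_zero, Nat.cast_one, Real.exp_zero,
    mul_one, div_one, one_le_div hn] at h
  rwa [div_pow, div_le_iff₀ (by positivity), ← Real.exp_nat_mul, mul_one]

theorem two_pow_mul_factorial_mul_prod_odd (n : ℕ) :
    2 ^ n * n.factorial * ∏ l ∈ Finset.range n, (2 * l + 1) = (2 * n).factorial := by
  induction n with
  | zero => simp
  | succ n ih =>
    rw [Finset.prod_range_succ, show 2 * (n + 1) = 2 * n + 1 + 1 by ring, Nat.factorial_succ,
      Nat.factorial_succ, Nat.factorial_succ (2 * n), ← ih]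
    ring

theorem two_mul_pow_self_le_exp_mul_prod_odd (n : ℕ) :
    (2 * (n : ℝ)) ^ n ≤ Real.exp n * ∏ l ∈ Finset.range n, (2 * (l : ℝ) + 1) := by
  rcases n.eq_zero_or_pos with rfl | hn
  · simp
  have hodd : 2 ^ n * (n.factorial : ℝ) * ∏ l ∈ Finset.range n, (2 * (l : ℝ) + 1) =
      (2 * n).factorial := by exact_mod_cast two_pow_mul_factorial_mul_prod_odd n
  have hmono := monotone_factorial_mul_exp_div_pow_self (Nat.le_mul_of_pos_left n two_pos)
  simp only [← hodd, Nat.cast_mul, Nat.cast_ofNat] at hmono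
  rw [div_le_div_iff₀ (by positivity) (by positivity), two_mul (n : ℝ), Real.exp_add,
    ← two_mul] at hmono
  refine le_of_mul_le_mul_left ?_
    (show 0 < n.factorial * Real.exp n * (2 ^ n * (n : ℝ) ^ n) by positivity)
  linear_combination hmono

end FactorialEstimates

section MarkovInequality

open Polynomial

theorem iterate_derivative_comp_C_mul_X_add_C {R : Type*} [CommSemiring R] (p : R[X]) (u v : R)
    (k : ℕ) :
    derivative^[k] (p.comp (C u * X + C v)) =
      C (u ^ k) * (derivative^[k] p).comp (C u * X + C v) := by
  induction k with
  | zero => simp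
  | succ k ih =>
    rw [Function.iterate_succ_apply', ih, derivative_C_mul, derivative_comp,
      Function.iterate_succ_apply']
    simp only [derivative_add, derivative_C, derivative_C_mul, derivative_X, C_pow]
    ring

theorem abs_eval_iterate_derivative_one_le {n : ℕ} {P : ℝ[X]} {B : ℝ} (hdeg : P.degree ≤ n)
    (hB : ∀ y ∈ Icc (-1 : ℝ) 1, |P.eval y| ≤ B) (k : ℕ) :
    |(derivative^[k] P).eval 1| ≤ B * (derivative^[k] (Chebyshev.T ℝ n)).eval 1 := by
  rcases ((abs_nonneg _).trans (hB 1 (by simp))).eq_or_lt with rfl | hB0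
  · have hroots : Icc (-1 : ℝ) 1 ⊆ {y | P.IsRoot y} := fun y hy => abs_nonpos_iff.1 (hB y hy)
    simp [P.eq_zero_of_infinite_isRoot ((Icc_infinite (by norm_num)).mono hroots)]
  have scaled (c : ℝ) (hc : |c| = B⁻¹) :
      c * (derivative^[k] P).eval 1 ≤ (derivative^[k] (Chebyshev.T ℝ n)).eval 1 := by
    have h := Chebyshev.eval_iterate_derivative_le_of_forall_abs_le_one (P := c • P) (k := k)
      le_rfl ((degree_smul_le c P).trans hdeg) fun y hy => by
        rw [eval_smul, smul_eq_mul, abs_mul, hc, inv_mul_le_iff₀ hB0, mul_one]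
        exact hB y hy
    rwa [iterate_derivative_smul, eval_smul, smul_eq_mul] at h
  have hpos := scaled B⁻¹ (abs_of_pos (inv_pos.2 hB0))
  have hneg := scaled (-B⁻¹) (by rw [abs_neg, abs_of_pos (inv_pos.2 hB0)])
  rw [neg_mul, ← mul_neg] at hneg
  rw [inv_mul_le_iff₀ hB0] at hpos hneg
  exact abs_le'.2 ⟨hpos, hneg⟩

theorem abs_eval_iterate_derivative_left_le {n : ℕ} {P : ℝ[X]} {B c d : ℝ} (hcd : c ≠ d)
    (hdeg : P.degree ≤ n) (hB : ∀ x ∈ uIcc c d, |P.eval x| ≤ B) (k : ℕ) :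
    |(derivative^[k] P).eval c| ≤
      B * (derivative^[k] (Chebyshev.T ℝ n)).eval 1 * (2 / |d - c|) ^ k := by
  set L : ℝ[X] := C ((c - d) / 2) * X + C ((c + d) / 2) with hL
  have hL_one : L.eval 1 = c := by
    simp only [hL, eval_add, eval_mul, eval_C, eval_X]
    ring
  have hL_mem : ∀ y ∈ Icc (-1 : ℝ) 1, L.eval y ∈ uIcc c d := fun y hy => by
    rw [← segment_eq_uIcc]
    refine ⟨(1 + y) / 2, (1 - y) / 2, by linarith [hy.1], by linarith [hy.2], by ring, ?_⟩
    simp only [hL, eval_add, eval_mul, eval_C, eval_X, smul_eq_mul]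
    ring
  have hL_deg : L.natDegree ≤ 1 := natDegree_linear_le
  have hPL_deg : (P.comp L).degree ≤ n := by
    rw [← natDegree_le_iff_degree_le] at hdeg ⊢
    calc (P.comp L).natDegree ≤ P.natDegree * L.natDegree := natDegree_comp_le
      _ ≤ n * 1 := by gcongr
      _ = n := mul_one n
  have h := abs_eval_iterate_derivative_one_le hPL_deg
    (fun y hy => by rw [eval_comp]; exact hB _ (hL_mem y hy)) k
  rw [iterate_derivative_comp_C_mul_X_add_C, eval_mul, eval_C, eval_comp, hL_one, abs_mul,
    abs_pow, abs_div, abs_two, abs_sub_comm] at h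
  have hdc : 0 < |d - c| := abs_pos.2 (sub_ne_zero.2 hcd.symm)
  rwa [← inv_div, inv_pow, ← div_eq_mul_inv, le_div_iff₀' (pow_pos (half_pos hdc) k)]

theorem eval_iterate_derivative_T_one_le {n k : ℕ} (hkn : k ≤ n) :
    (derivative^[k] (Chebyshev.T ℝ n)).eval 1 ≤ (Real.exp 1 * n ^ 2 / (2 * k)) ^ k := by
  rcases k.eq_zero_or_pos with rfl | hk
  · simp
  have hk' : (0 : ℝ) < k := by exact_mod_cast hk
  have hodd : 0 < ∏ l ∈ Finset.range k, (2 * (l : ℝ) + 1) :=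
    Finset.prod_pos fun _ _ => by positivity
  have hprod : ∏ l ∈ Finset.range k, ((n : ℝ) ^ 2 - (l : ℝ) ^ 2) ≤ ((n : ℝ) ^ 2) ^ k := by
    calc _ ≤ ∏ _l ∈ Finset.range k, (n : ℝ) ^ 2 := by
          refine Finset.prod_le_prod (fun l hl => ?_) fun l _ => sub_le_self _ (sq_nonneg _)
          have hln : (l : ℝ) ≤ n := by exact_mod_cast (Finset.mem_range.1 hl).le.trans hkn
          exact sub_nonneg.2 (by gcongr)
      _ = ((n : ℝ) ^ 2) ^ k := by simp
  have h := Chebyshev.iterate_derivative_T_eval_one (R := ℝ) n k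
  push_cast at h
  refine le_of_mul_le_mul_left ((h.trans_le hprod).trans ?_) hodd
  calc ((n : ℝ) ^ 2) ^ k = (2 * (k : ℝ)) ^ k * ((n : ℝ) ^ 2 / (2 * k)) ^ k := by
        rw [← mul_pow, mul_div_cancel₀ _ (mul_pos two_pos hk').ne']
    _ ≤ (Real.exp k * ∏ l ∈ Finset.range k, (2 * (l : ℝ) + 1)) *
          ((n : ℝ) ^ 2 / (2 * k)) ^ k := by
        gcongr
        exact two_mul_pow_self_le_exp_mul_prod_odd k
    _ = (∏ l ∈ Finset.range k, (2 * (l : ℝ) + 1)) *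
          (Real.exp 1 * (n : ℝ) ^ 2 / (2 * k)) ^ k := by
        rw [mul_div_assoc, mul_pow, ← Real.exp_nat_mul, mul_one]
        ring

end MarkovInequality

section IteratedDerivWithin

variable {𝕜 E F : Type*} [NontriviallyNormedField 𝕜] [NormedAddCommGroup E] [NormedSpace 𝕜 E]
  [NormedAddCommGroup F] [NormedSpace 𝕜 F]

theorem eqOn_iteratedDerivWithin_of_subset {f : 𝕜 → E} {s t : Set 𝕜} {n : ℕ} (hst : s ⊆ t)
    (hs : UniqueDiffOn 𝕜 s) (hf : ∀ j < n, DifferentiableOn 𝕜 (iteratedDerivWithin j f t) t) :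
    EqOn (iteratedDerivWithin n f s) (iteratedDerivWithin n f t) s := by
  induction n with
  | zero => simp [EqOn]
  | succ n ih =>
    intro x hx
    have ih' := ih fun j hj => hf j (hj.trans n.lt_succ_self)
    rw [iteratedDerivWithin_succ, iteratedDerivWithin_succ, derivWithin_congr ih' (ih' hx),
      derivWithin_subset hst (hs x hx) (hf n n.lt_succ_self x (hst hx))]

theorem eqOn_iteratedDerivWithin_clm_comp {f : 𝕜 → E} {s : Set 𝕜} {n : ℕ} (φ : E →L[𝕜] F)
    (hf : ∀ j < n, DifferentiableOn 𝕜 (iteratedDerivWithin j f s) s) :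
    EqOn (iteratedDerivWithin n (φ ∘ f) s) (φ ∘ iteratedDerivWithin n f s) s := by
  induction n with
  | zero => simp [EqOn]
  | succ n ih =>
    intro x hx
    have ih' := ih fun j hj => hf j (hj.trans n.lt_succ_self)
    rw [iteratedDerivWithin_succ, derivWithin_congr ih' (ih' hx),
      fderivWithin_comp_derivWithin x φ.differentiableWithinAt (hf n n.lt_succ_self x hx)
        (mapsTo_univ _ _), fderivWithin_univ, φ.fderiv, Function.comp_apply,
      iteratedDerivWithin_succ]

end IteratedDerivWithin

section TaylorPolynomial

open Polynomial

theorem abs_sub_taylorWithinEval_le {f : ℝ → ℝ} {s : Set ℝ} {x₀ x M : ℝ} {n : ℕ}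
    (hs : uIcc x₀ x ⊆ s) (hf : ∀ j ≤ n, DifferentiableOn ℝ (iteratedDerivWithin j f s) s)
    (hM : ∀ y ∈ uIcc x₀ x, |iteratedDerivWithin (n + 1) f s y| ≤ M) :
    |f x - taylorWithinEval f n s x₀ x| ≤ M * |x - x₀| ^ (n + 1) / (n + 1).factorial := by
  rcases eq_or_ne x₀ x with rfl | hx
  · simp
  have hderiv {j : ℕ} (hj : j ≤ n + 1) :
      EqOn (iteratedDerivWithin j f (uIcc x₀ x)) (iteratedDerivWithin j f s) (uIcc x₀ x) :=
    eqOn_iteratedDerivWithin_of_subset hs (uniqueDiffOn_uIcc hx) fun i hi => hf i (by lia)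
  have hdiff : ∀ j ≤ n, DifferentiableOn ℝ (iteratedDerivWithin j f (uIcc x₀ x)) (uIcc x₀ x) :=
    fun j hj => ((hf j hj).mono hs).congr (hderiv (by lia))
  obtain ⟨y, hy, hrem⟩ := taylor_mean_remainder_lagrange hx
    (contDiffOn_of_differentiableOn_deriv fun j hj => hdiff j (by exact_mod_cast hj))
    ((hdiff n le_rfl).mono uIoo_subset_uIcc_self)
  have htaylor : taylorWithinEval f n (uIcc x₀ x) x₀ x = taylorWithinEval f n s x₀ x := by
    simp only [taylor_within_apply]
    exact Finset.sum_congr rfl fun j hj => by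
      rw [hderiv (Finset.mem_range.1 hj).le left_mem_uIcc]
  have hy' := uIoo_subset_uIcc_self hy
  rw [← htaylor, hrem, hderiv le_rfl hy', abs_div, abs_mul, abs_pow, Nat.abs_cast]
  gcongr
  exact hM y hy'

/-- The Taylor polynomial of degree `n` of a real function, with derivatives taken within `s`.
Mathlib's `taylorWithin` is an element of `PolynomialModule ℝ ℝ`, for which degrees and
derivatives are not available; this is the same object as an ordinary polynomial. -/
noncomputable def taylorWithinPolynomial (f : ℝ → ℝ) (n : ℕ) (s : Set ℝ) (x₀ : ℝ) : ℝ[X] :=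
  ∑ j ∈ Finset.range (n + 1), C (taylorCoeffWithin f j s x₀) * (X - C x₀) ^ j

variable (f : ℝ → ℝ) (n : ℕ) (s : Set ℝ) (x₀ : ℝ)

theorem degree_taylorWithinPolynomial_le : (taylorWithinPolynomial f n s x₀).degree ≤ n := by
  refine (degree_sum_le _ _).trans (Finset.sup_le fun j hj => ?_)
  have hj' : j ≤ n := Finset.mem_range_succ_iff.1 hj
  rw [← natDegree_le_iff_degree_le]
  compute_degree!

theorem eval_taylorWithinPolynomial (x : ℝ) :
    (taylorWithinPolynomial f n s x₀).eval x = taylorWithinEval f n s x₀ x := by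
  rw [taylorWithinPolynomial, eval_finsetSum, taylor_within_apply]
  refine Finset.sum_congr rfl fun j _ => ?_
  simp only [taylorCoeffWithin, smul_eq_mul, eval_mul, eval_C, eval_pow, eval_sub, eval_X]
  ring

theorem eval_iterate_derivative_taylorWithinPolynomial {k : ℕ} (hk : k ≤ n) :
    (derivative^[k] (taylorWithinPolynomial f n s x₀)).eval x₀ =
      iteratedDerivWithin k f s x₀ := by
  have hcoeff : (taylor x₀ (taylorWithinPolynomial f n s x₀)).coeff k =
      taylorCoeffWithin f k s x₀ := by
    simp [taylorWithinPolynomial, taylor_apply, finsetSum_coeff, coeff_X_pow, Nat.lt_succ_of_le hk]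
  rw [← factorial_smul_hasseDeriv, LinearMap.smul_apply, eval_smul, ← taylor_coeff, hcoeff,
    taylorCoeffWithin, nsmul_eq_mul, smul_eq_mul, mul_inv_cancel_left₀ (by positivity)]

end TaylorPolynomial

section EndpointEstimate

open Polynomial

theorem abs_iteratedDerivWithin_left_le {f : ℝ → ℝ} {s : Set ℝ} {c d A M : ℝ} {n k : ℕ}
    (hcd : c ≠ d) (hs : uIcc c d ⊆ s)
    (hf : ∀ j ≤ n, DifferentiableOn ℝ (iteratedDerivWithin j f s) s)
    (hA : ∀ x ∈ uIcc c d, |f x| ≤ A)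
    (hM : ∀ x ∈ uIcc c d, |iteratedDerivWithin (n + 1) f s x| ≤ M) (hk : k ≤ n) :
    |iteratedDerivWithin k f s c| ≤ (A + M * |d - c| ^ (n + 1) / (n + 1).factorial) *
      (derivative^[k] (Chebyshev.T ℝ n)).eval 1 * (2 / |d - c|) ^ k := by
  have hM0 : 0 ≤ M := (abs_nonneg _).trans (hM c left_mem_uIcc)
  rw [← eval_iterate_derivative_taylorWithinPolynomial f n s c hk]
  refine abs_eval_iterate_derivative_left_le hcd (degree_taylorWithinPolynomial_le f n s c)
    (fun x hx => ?_) k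
  have hcx : uIcc c x ⊆ uIcc c d := uIcc_subset_uIcc_left hx
  have hrem := abs_sub_taylorWithinEval_le (hcx.trans hs) hf fun y hy => hM y (hcx hy)
  rw [eval_taylorWithinPolynomial]
  calc |taylorWithinEval f n s c x| ≤ |f x| + |f x - taylorWithinEval f n s c x| := by
        simpa using abs_sub (f x) (f x - taylorWithinEval f n s c x)
    _ ≤ A + M * |x - c| ^ (n + 1) / (n + 1).factorial := add_le_add (hA x hx) hrem
    _ ≤ A + M * |d - c| ^ (n + 1) / (n + 1).factorial := by
        have hxc := abs_sub_left_of_mem_uIcc hx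
        gcongr

variable {E : Type*} [NormedAddCommGroup E] [NormedSpace ℝ E]

theorem norm_iteratedDerivWithin_left_le {f : ℝ → E} {s : Set ℝ} {c d A M : ℝ} {n k : ℕ}
    (hcd : c ≠ d) (hs : uIcc c d ⊆ s)
    (hf : ∀ j ≤ n, DifferentiableOn ℝ (iteratedDerivWithin j f s) s)
    (hA : ∀ x ∈ uIcc c d, ‖f x‖ ≤ A)
    (hM : ∀ x ∈ uIcc c d, ‖iteratedDerivWithin (n + 1) f s x‖ ≤ M) (hk : k ≤ n) :
    ‖iteratedDerivWithin k f s c‖ ≤ (A + M * |d - c| ^ (n + 1) / (n + 1).factorial) *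
      (derivative^[k] (Chebyshev.T ℝ n)).eval 1 * (2 / |d - c|) ^ k := by
  obtain ⟨φ, hφ, hφk⟩ := exists_dual_vector'' ℝ (iteratedDerivWithin k f s c)
  have hφ_le (v : E) : |φ v| ≤ ‖v‖ := φ.le_of_opNorm_le_of_le hφ le_rfl |>.trans_eq (one_mul _)
  have hcomp {j : ℕ} (hj : j ≤ n + 1) :
      EqOn (iteratedDerivWithin j (φ ∘ f) s) (φ ∘ iteratedDerivWithin j f s) s :=
    eqOn_iteratedDerivWithin_clm_comp φ fun i hi => hf i (by lia)
  have h := abs_iteratedDerivWithin_left_le (f := φ ∘ f) hcd hs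
    (fun j hj => (φ.differentiable.comp_differentiableOn (hf j hj)).congr (hcomp (by lia)))
    (fun x hx => (hφ_le _).trans (hA x hx))
    (fun x hx => by rw [hcomp le_rfl (hs hx)]; exact (hφ_le _).trans (hM x hx)) hk
  rwa [hcomp (by lia) (hs left_mem_uIcc), Function.comp_apply, hφk, RCLike.ofReal_real_eq_id,
    id_eq, abs_norm] at h

end EndpointEstimate

section StepSize

theorem exists_mem_Icc_abs_sub_eq {a b x h : ℝ} (hx : x ∈ Icc a b) (hh : 0 ≤ h)
    (hhle : h ≤ (b - a) / 2) : ∃ d ∈ Icc a b, |d - x| = h := by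
  rcases le_total x ((a + b) / 2) with hmid | hmid
  · exact ⟨x + h, ⟨by linarith [hx.1], by linarith⟩, by simp [abs_of_nonneg hh]⟩
  · exact ⟨x - h, ⟨by linarith, by linarith [hx.2]⟩, by simp [abs_of_nonneg hh]⟩

theorem exists_pos_le_pow_eq_div {l M N : ℝ} {m : ℕ} (hm : m ≠ 0) (hl : 0 < l) (hN : 0 < N)
    (hNM : N * l⁻¹ ^ m ≤ M) : ∃ h, 0 < h ∧ h ≤ l ∧ h ^ m = N / M := by
  have hM : 0 < M := lt_of_lt_of_le (by positivity) hNM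
  have hpow : ((N / M) ^ (m : ℝ)⁻¹) ^ m = N / M :=
    Real.rpow_inv_natCast_pow (by positivity) hm
  refine ⟨(N / M) ^ (m : ℝ)⁻¹, by positivity, ?_, hpow⟩
  rwa [← pow_le_pow_iff_left₀ (by positivity) hl.le hm, hpow, div_le_iff₀ hM,
    ← div_le_iff₀' (by positivity), div_eq_mul_inv, ← inv_pow]

theorem mul_div_pow_le_rpow_mul_rpow {A M h : ℝ} {m : ℕ} (hm : m ≠ 0) (hA : 0 < A) (hM : 0 < M)
    (hh : 0 < h) (hhm : h ^ m = m.factorial * A / M) (k : ℕ) :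
    A * (m / Real.exp 1 / h) ^ k ≤ A ^ (1 - (k : ℝ) / m) * M ^ ((k : ℝ) / m) := by
  have hbase : m / Real.exp 1 / h ≤ (M / A) ^ (m : ℝ)⁻¹ := by
    rw [← pow_le_pow_iff_left₀ (by positivity) (by positivity) hm,
      Real.rpow_inv_natCast_pow (by positivity) hm, div_pow, hhm]
    calc ((m : ℝ) / Real.exp 1) ^ m / (m.factorial * A / M)
        ≤ m.factorial / (m.factorial * A / M) := by
          gcongr
          exact div_exp_one_pow_self_le_factorial m
      _ = M / A := by field_simp
  calc A * (m / Real.exp 1 / h) ^ k ≤ A * ((M / A) ^ (m : ℝ)⁻¹) ^ k := by gcongr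
    _ = A * (M / A) ^ ((k : ℝ) / m) := by
        rw [← Real.rpow_mul_natCast (by positivity), inv_mul_eq_div]
    _ = A ^ (1 - (k : ℝ) / m) * M ^ ((k : ℝ) / m) := by
        rw [Real.div_rpow hM.le hA.le, Real.rpow_sub hA, Real.rpow_one]
        ring

end StepSize

section PointwiseInequality

open Polynomial

variable {E : Type*} [NormedAddCommGroup E] [NormedSpace ℝ E]

theorem norm_iteratedDerivWithin_le_mul_pow {f : ℝ → E} {s : Set ℝ} {c d A M : ℝ} {n k : ℕ}
    (hcd : c ≠ d) (hs : uIcc c d ⊆ s)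
    (hf : ∀ j ≤ n, DifferentiableOn ℝ (iteratedDerivWithin j f s) s)
    (hA : ∀ x ∈ uIcc c d, ‖f x‖ ≤ A)
    (hM : ∀ x ∈ uIcc c d, ‖iteratedDerivWithin (n + 1) f s x‖ ≤ M) (hk : k ≤ n) :
    ‖iteratedDerivWithin k f s c‖ ≤ (A + M * |d - c| ^ (n + 1) / (n + 1).factorial) *
      (Real.exp 1 * n ^ 2 / (k * |d - c|)) ^ k := by
  have hA0 : 0 ≤ A := (norm_nonneg _).trans (hA c left_mem_uIcc)
  have hM0 : 0 ≤ M := (norm_nonneg _).trans (hM c left_mem_uIcc)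
  calc ‖iteratedDerivWithin k f s c‖
      ≤ (A + M * |d - c| ^ (n + 1) / (n + 1).factorial) *
          (derivative^[k] (Chebyshev.T ℝ n)).eval 1 * (2 / |d - c|) ^ k :=
        norm_iteratedDerivWithin_left_le hcd hs hf hA hM hk
    _ ≤ (A + M * |d - c| ^ (n + 1) / (n + 1).factorial) *
          (Real.exp 1 * n ^ 2 / (2 * k)) ^ k * (2 / |d - c|) ^ k := by
        gcongr
        exact eval_iterate_derivative_T_one_le hk
    _ = (A + M * |d - c| ^ (n + 1) / (n + 1).factorial) *
          (Real.exp 1 * n ^ 2 / (k * |d - c|)) ^ k := by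
        rw [mul_assoc, ← mul_pow]
        congr 2
        field_simp

theorem norm_iteratedDerivWithin_le_rpow_of_abs_sub_pow_eq {f : ℝ → E} {s : Set ℝ}
    {c d A M : ℝ} {m k : ℕ} (hkm : k < m) (hA0 : 0 < A) (hM0 : 0 < M) (hs : uIcc c d ⊆ s)
    (hf : ∀ j < m, DifferentiableOn ℝ (iteratedDerivWithin j f s) s)
    (hA : ∀ x ∈ uIcc c d, ‖f x‖ ≤ A) (hM : ∀ x ∈ uIcc c d, ‖iteratedDerivWithin m f s x‖ ≤ M)
    (hdc : |d - c| ^ m = m.factorial * A / M) :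
    ‖iteratedDerivWithin k f s c‖ ≤
      2 * (Real.exp 2 * m / k) ^ k * A ^ (1 - (k : ℝ) / m) * M ^ ((k : ℝ) / m) := by
  obtain ⟨n, rfl⟩ : ∃ n, m = n + 1 := ⟨m - 1, by lia⟩
  have hdc_pos : 0 < |d - c| := by
    refine (abs_nonneg _).lt_of_ne' (pow_ne_zero_iff n.succ_ne_zero |>.1 ?_)
    rw [hdc]
    positivity
  have hcd : c ≠ d := (sub_ne_zero.1 (abs_pos.1 hdc_pos)).symm
  have hrem : M * |d - c| ^ (n + 1) / (n + 1).factorial = A := by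
    rw [hdc]
    field_simp
  have hexp : Real.exp 2 = Real.exp 1 * Real.exp 1 := by
    rw [← Real.exp_add, one_add_one_eq_two]
  calc ‖iteratedDerivWithin k f s c‖
      ≤ (A + A) * (Real.exp 1 * n ^ 2 / (k * |d - c|)) ^ k := by
        simpa only [hrem] using
          norm_iteratedDerivWithin_le_mul_pow hcd hs (fun j hj => hf j (by lia)) hA hM (by lia)
    _ ≤ (A + A) * (Real.exp 1 * ((n + 1 : ℕ) : ℝ) ^ 2 / (k * |d - c|)) ^ k := by
        gcongr
        exact n.le_succ
    _ = 2 * (Real.exp 2 * (n + 1 : ℕ) / k) ^ k *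
          (A * ((n + 1 : ℕ) / Real.exp 1 / |d - c|) ^ k) := by
        rw [← two_mul, mul_mul_mul_comm, ← mul_pow, hexp]
        congr 2
        field_simp
    _ ≤ 2 * (Real.exp 2 * (n + 1 : ℕ) / k) ^ k *
          (A ^ (1 - (k : ℝ) / (n + 1 : ℕ)) * M ^ ((k : ℝ) / (n + 1 : ℕ))) :=
        mul_le_mul_of_nonneg_left
          (mul_div_pow_le_rpow_mul_rpow n.succ_ne_zero hA0 hM0 hdc_pos hdc k) (by positivity)
    _ = 2 * (Real.exp 2 * (n + 1 : ℕ) / k) ^ k * A ^ (1 - (k : ℝ) / (n + 1 : ℕ)) *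
          M ^ ((k : ℝ) / (n + 1 : ℕ)) := (mul_assoc _ _ _).symm

theorem norm_iteratedDerivWithin_le_rpow {f : ℝ → E} {a b A M x : ℝ} {m k : ℕ} (hab : a < b)
    (hkm : k < m)
    (hf : ∀ j < m, DifferentiableOn ℝ (iteratedDerivWithin j f (Icc a b)) (Icc a b))
    (hA : ∀ y ∈ Icc a b, ‖f y‖ ≤ A)
    (hM : ∀ y ∈ Icc a b, ‖iteratedDerivWithin m f (Icc a b) y‖ ≤ M)
    (hAM : m.factorial * A * (2 / (b - a)) ^ m ≤ M) (hx : x ∈ Icc a b) :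
    ‖iteratedDerivWithin k f (Icc a b) x‖ ≤
      2 * (Real.exp 2 * m / k) ^ k * A ^ (1 - (k : ℝ) / m) * M ^ ((k : ℝ) / m) := by
  have hba : 0 < b - a := sub_pos.2 hab
  rcases ((norm_nonneg _).trans (hA x hx)).eq_or_lt with rfl | hA0
  · have hM0 : 0 ≤ M := (norm_nonneg _).trans (hM x hx)
    have hf0 : EqOn f (fun _ => 0) (Icc a b) := fun y hy => norm_le_zero_iff.1 (hA y hy)
    rw [iteratedDerivWithin_congr hf0 hx, iteratedDerivWithin_fun_const_zero, norm_zero]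
    positivity
  have hM0 : 0 < M := lt_of_lt_of_le (by positivity) hAM
  obtain ⟨h, hh, hhle, hhm⟩ := exists_pos_le_pow_eq_div (M := M) (show m ≠ 0 by lia)
    (half_pos hba) (show 0 < m.factorial * A by positivity) (by rwa [inv_div])
  obtain ⟨d, hd, rfl⟩ := exists_mem_Icc_abs_sub_eq hx hh.le hhle
  have hs : uIcc x d ⊆ Icc a b := uIcc_subset_Icc hx hd
  exact norm_iteratedDerivWithin_le_rpow_of_abs_sub_pow_eq hkm hA0 hM0 hs hf
    (fun y hy => hA y (hs hy)) (fun y hy => hM y (hs hy)) hhm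

end PointwiseInequality

theorem cartan_gorny_inequality_general {E : Type*} [NormedAddCommGroup E] [NormedSpace ℝ E]
    {a b : ℝ} (hab : a < b) {m : ℕ} {g : ℝ → E}
    (hg : ∀ k < m, DifferentiableOn ℝ (iteratedDerivWithin k g (Icc a b)) (Icc a b))
    {G : ℕ → ℝ} (hG : ∀ l, G l = sSup ((fun x => ‖iteratedDerivWithin l g (Icc a b) x‖) '' Icc a b))
    (hG0 : BddAbove ((fun x => ‖iteratedDerivWithin 0 g (Icc a b) x‖) '' Icc a b))
    (hGm : BddAbove ((fun x => ‖iteratedDerivWithin m g (Icc a b) x‖) '' Icc a b))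
    {k : ℕ} (hkm : k < m) :
    G k ≤ 2 * (Real.exp 2 * m / k) ^ k * G 0 ^ (1 - (k : ℝ) / m) *
      max (m.factorial * G 0 * (2 / (b - a)) ^ m) (G m) ^ ((k : ℝ) / m) := by
  have norm_le_G {l : ℕ}
      (hGl : BddAbove ((fun x => ‖iteratedDerivWithin l g (Icc a b) x‖) '' Icc a b)) :
      ∀ x ∈ Icc a b, ‖iteratedDerivWithin l g (Icc a b) x‖ ≤ G l := fun x hx => by
    rw [hG l]
    exact le_csSup hGl (mem_image_of_mem _ hx)
  rw [hG k]
  refine csSup_le ((nonempty_Icc.2 hab.le).image _) (forall_mem_image.2 fun x hx => ?_)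
  exact norm_iteratedDerivWithin_le_rpow hab hkm hg
    (by simpa only [iteratedDerivWithin_zero] using norm_le_G hG0)
    (fun y hy => (norm_le_G hGm y hy).trans (le_max_right _ _)) (le_max_left _ _) hx

/-- **Lemma (Cartan–Gorny inequality).** For `g` an `m`-times differentiable function
on `[a,b]` with `G ℓ = sup_{[a,b]} |g^(ℓ)|` finite for `ℓ = 0, m`, and `1 ≤ k ≤ m - 1`,
`G k ≤ 2 (e² m / k)^k G₀^(1 - k/m) (max (m! G₀ (2/(b-a))^m) (G m))^(k/m)`. -/
theorem cartan_gorny_inequality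
    (a b : ℝ) (hab : a < b)
    (m : ℕ) (hm : 2 ≤ m)
    (g : ℝ → ℝ)
    (hg : ∀ k : ℕ, k < m →
      DifferentiableOn ℝ (iteratedDerivWithin k g (Icc a b)) (Icc a b))
    (G : ℕ → ℝ)
    (hG : ∀ l : ℕ, G l = sSup ((fun x => |iteratedDerivWithin l g (Icc a b) x|) '' Icc a b))
    (hG0 : BddAbove ((fun x => |iteratedDerivWithin 0 g (Icc a b) x|) '' Icc a b))
    (hGm : BddAbove ((fun x => |iteratedDerivWithin m g (Icc a b) x|) '' Icc a b))
    (k : ℕ) (hk1 : 1 ≤ k) (hkm : k ≤ m - 1) :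
    G k ≤ 2 * (Real.exp 2 * (m : ℝ) / (k : ℝ)) ^ k * (G 0) ^ (1 - (k : ℝ) / (m : ℝ)) *
      (max ((m.factorial : ℝ) * G 0 * (2 / (b - a)) ^ m) (G m)) ^ ((k : ℝ) / (m : ℝ)) := by
  exact cartan_gorny_inequality_general hab hg hG hG0 hGm (by lia)
end
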